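/- arXiv:2605.04464 — 2 statements merged into one kernel-verified Lean document; each statement's English description precedes it below -/
import Mathlib

section
/- Let D be a division ring with center F and let n be a positive integer. Suppose f is an element of the free associative F-algebra F⟨X⟩ (in variables x₁,…,x_m) whose image f(M_n(D)) is not contained in the center of M_n(D). Then either M_n(D) equals the additive subgroup generated by the set of products {f(a₁,…,a_m)·f(b₁,…,b_m) : a_i, b_j ∈ M_n(D)}, or else n = 2, D has exactly two elements, and this additive subgroup equals the four-element set {0, I₂, [[1,1],[1,0]], [[0,1],[1,1]]} of 2×2 matrices over the two-element field. -/
/-!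
The additive subgroup `V` spanned by the values of `f` is invariant under conjugation, and the
products of two values span a subgroup containing `V * V`.

For `n = 1` and infinite center `F`, the values of `f` are combined along a line `x + r • w`, with
weights that isolate a homogeneous component and the terms linear in `w`. As inner derivations act
on a homogeneous form by the Leibniz rule, this puts `⁅a, D⁆` into `V` modulo the center for some
noncentral `a`. If `F` is finite, then `D` is infinite-dimensional over `F`; polarization yields
a nonzero multilinear polynomial with values in `V`, and Kaplansky's theorem on polynomial
identities makes one of them noncentral, with the same conclusion. The Cartan–Brauer–Hua theorem
promotes it to `⁅D, D⁆ ⊆ V`, and then the identity `⁅p, q⁆ * x = ⁅p, q * x⁆ - q * ⁅p, x⁆` shows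
that `V * V` spans `D`.

For `n ≥ 2`, conjugating a noncentral matrix of `V` by transvections and diagonal matrices produces
a multiple of an off-diagonal matrix unit. This fails only for `2 × 2` matrices over the field with
two elements, which are the sum of the field with four elements and a complement on which it acts
semilinearly; either summand may contain `V`, and its products then span the field.
-/

open Pointwise TensorProduct

attribute [local instance] LieRing.ofAssociativeRing

section ConjInvariant

variable {R : Type*} [Ring R]

/-- A subset of a ring is conjugation invariant if it is stable under all inner automorphisms. -/
def ConjInvariant (S : Set R) : Prop :=
  ∀ u : Rˣ, ∀ s ∈ S, u * s * ↑u⁻¹ ∈ S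

namespace ConjInvariant

variable {S T : Set R}

theorem mul (hS : ConjInvariant S) (hT : ConjInvariant T) : ConjInvariant (S * T) := by
  rintro u _ ⟨s, hs, t, ht, rfl⟩
  refine ⟨_, hS u s hs, _, hT u t ht, ?_⟩
  simp [mul_assoc]

theorem closure (hS : ConjInvariant S) : ConjInvariant (AddSubgroup.closure S : Set R) := by
  intro u s hs
  induction hs using AddSubgroup.closure_induction with
  | mem s hs => exact AddSubgroup.subset_closure (hS u s hs)
  | zero => simp
  | add s t _ _ hs ht => simpa [mul_add, add_mul] using add_mem hs ht
  | neg s _ hs => simpa using neg_mem hs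

theorem center : ConjInvariant (Subring.center R : Set R) := by
  intro u z hz
  rw [SetLike.mem_coe] at hz ⊢
  rwa [Subring.mem_center_iff.mp hz u, mul_assoc, u.mul_inv, mul_one]

theorem image {R' : Type*} [Ring R'] (hS : ConjInvariant S) (e : R ≃+* R') :
    ConjInvariant (e '' S) := by
  rintro u _ ⟨s, hs, rfl⟩
  refine ⟨_, hS (Units.map (e.symm : R' →* R) u) s hs, ?_⟩
  simp [← map_inv]

theorem sup {V W : AddSubgroup R} (hV : ConjInvariant (V : Set R))
    (hW : ConjInvariant (W : Set R)) : ConjInvariant ((V ⊔ W : AddSubgroup R) : Set R) := by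
  intro u x hx
  obtain ⟨v, hv, w, hw, rfl⟩ := AddSubgroup.mem_sup.mp hx
  rw [mul_add, add_mul]
  exact AddSubgroup.add_mem_sup (hV u v hv) (hW u w hw)

end ConjInvariant

theorem mul_mem_closure_mul {S T : Set R} {v w : R} (hv : v ∈ AddSubgroup.closure S)
    (hw : w ∈ AddSubgroup.closure T) : v * w ∈ AddSubgroup.closure (S * T) := by
  suffices AddSubgroup.closure S ≤
      (AddSubgroup.closure (S * T)).comap (AddMonoidHom.mulRight w) from this hv
  refine (AddSubgroup.closure_le _).mpr fun s hs ↦ ?_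
  suffices AddSubgroup.closure T ≤
      (AddSubgroup.closure (S * T)).comap (AddMonoidHom.mulLeft s) from this hw
  exact (AddSubgroup.closure_le _).mpr fun t ht ↦
    AddSubgroup.subset_closure (Set.mul_mem_mul hs ht)

end ConjInvariant

section DivisionRing

variable {D : Type*} [DivisionRing D] {a s u x : D}

theorem exists_lie_ne_zero (ha : a ∉ Subring.center D) : ∃ x : D, ⁅a, x⁆ ≠ 0 := by
  by_contra! h
  exact ha (Subring.mem_center_iff.mpr fun x ↦ (sub_eq_zero.mp (h x)).symm)

theorem lie_eq_zero_of_mem_center (ha : a ∈ Subring.center D) (x : D) : ⁅x, a⁆ = 0 :=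
  sub_eq_zero.mpr (Subring.mem_center_iff.mp ha x)

theorem ConjInvariant.conj_mem {S : Set D} (hS : ConjInvariant S) (hu : u ≠ 0) (hx : x ∈ S) :
    u * x * u⁻¹ ∈ S := by
  simpa using hS (Units.mk0 u hu) x hx

theorem mul_comm_of_conjInvariant_of_notMem {K : Subfield D} (hK : ConjInvariant (K : Set D))
    (ha : a ∈ K) (hx : x ∉ K) : a * x = x * a := by
  have hx₀ : x ≠ 0 := fun h ↦ hx (h.symm ▸ K.zero_mem)
  have hx₁ : x + 1 ≠ 0 := fun h ↦ hx ((eq_neg_of_add_eq_zero_left h).symm ▸ K.neg_mem K.one_mem)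
  set b := x * a * x⁻¹
  set c := (x + 1) * a * (x + 1)⁻¹
  have hbK : b ∈ K := hK.conj_mem hx₀ ha
  have hcK : c ∈ K := hK.conj_mem hx₁ ha
  have hbx : b * x = x * a := inv_mul_cancel_right₀ hx₀ _
  have hcx : c * (x + 1) = (x + 1) * a := inv_mul_cancel_right₀ hx₁ _
  have hsub : (c - b) * x = a - c := by
    have hcx' : c * x = x * a + a - c := by
      rw [← add_one_mul, ← hcx, mul_add, mul_one, add_sub_cancel_right]
    rw [sub_mul, hbx, hcx']
    abel
  have hcb : c - b = 0 := by
    by_contra hcb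
    refine hx ?_
    rw [← inv_mul_cancel_left₀ hcb x, hsub]
    exact K.mul_mem (K.inv_mem (K.sub_mem hcK hbK)) (K.sub_mem ha hcK)
  rw [hcb, zero_mul] at hsub
  rw [← hbx, sub_eq_zero.mp hsub.symm, sub_eq_zero.mp hcb]

theorem cartan_brauer_hua {K : Subfield D} (hK : ConjInvariant (K : Set D)) (ha : a ∈ K)
    (hna : a ∉ Subring.center D) : K = ⊤ := by
  by_contra hne
  obtain ⟨x, hx⟩ : ∃ x, x ∉ K := by simpa [Subfield.ext_iff] using hne
  refine hna (Subring.mem_center_iff.mpr fun y ↦ ?_)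
  by_cases hy : y ∈ K
  · have hxy : x + y ∉ K := fun h ↦ hx (by simpa using K.sub_mem h hy)
    have h := mul_comm_of_conjInvariant_of_notMem hK ha hxy
    rw [mul_add, add_mul, mul_comm_of_conjInvariant_of_notMem hK ha hx] at h
    exact (add_left_cancel h).symm
  · exact (mul_comm_of_conjInvariant_of_notMem hK ha hy).symm

/-- The elements `b` with `⁅b, D⁆ ⊆ M`. -/
def lieIdealizer (M : AddSubgroup D) : Subfield D where
  carrier := {b | ∀ x, ⁅b, x⁆ ∈ M}
  zero_mem' := by simp
  one_mem' := by simp [Ring.lie_def]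
  add_mem' hb hc x := by simpa using add_mem (hb x) (hc x)
  neg_mem' {b} hb x := neg_lie b x ▸ neg_mem (hb x)
  mul_mem' {b c} hb hc x := by
    have h : ⁅b * c, x⁆ = ⁅b, c * x⁆ + ⁅c, x * b⁆ := by simp only [Ring.lie_def]; noncomm_ring
    exact h ▸ add_mem (hb _) (hc _)
  inv_mem' b hb x := by
    obtain rfl | hb₀ := eq_or_ne b 0
    · simp
    have h : ⁅b⁻¹, x⁆ = -⁅b, b⁻¹ * x * b⁻¹⁆ := by
      simp [Ring.lie_def, mul_assoc, hb₀]
    exact h ▸ neg_mem (hb _)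

theorem lie_mem_of_lie_mem {M : AddSubgroup D} (hM : ConjInvariant (M : Set D))
    (ha : a ∉ Subring.center D) (h : ∀ x, ⁅a, x⁆ ∈ M) (b x : D) : ⁅b, x⁆ ∈ M := by
  have hK : ConjInvariant (lieIdealizer M : Set D) := by
    intro u b hb x
    have h : ⁅u * b * ↑u⁻¹, x⁆ = u * ⁅b, ↑u⁻¹ * x * u⁆ * ↑u⁻¹ := by
      simp [Ring.lie_def, mul_sub, sub_mul, mul_assoc]
    exact h ▸ hM u _ (hb _)
  have hb : b ∈ lieIdealizer M := cartan_brauer_hua hK h ha ▸ Subfield.mem_top b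
  exact hb x

theorem exists_lie_lie_ne_zero (hs : s ∉ Subring.center D) : ∃ x y : D, ⁅s, ⁅x, y⁆⁆ ≠ 0 := by
  by_contra! h
  obtain ⟨x, hx⟩ := exists_lie_ne_zero hs
  have hmul : ⁅s, x⁆ * ⁅x, s⁆ = 0 := by
    calc ⁅s, x⁆ * ⁅x, s⁆ = ⁅s, ⁅x, x * s⁆⁆ - x * ⁅s, ⁅x, s⁆⁆ := by
          simp only [Ring.lie_def]; noncomm_ring
      _ = 0 := by simp [h]
  rw [← lie_skew x s, mul_neg, neg_eq_zero] at hmul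
  exact hx (mul_self_eq_zero.mp hmul)

theorem lie_lie_mem_of_lie_mem_sup_center {V : AddSubgroup D} (hV : ConjInvariant (V : Set D))
    (h : ∀ x y : D, ⁅x, y⁆ ∈ V ⊔ (Subring.center D).toAddSubgroup) (u x : D) :
    ⁅u, ⁅u, x⁆⁆ ∈ V := by
  obtain rfl | hu := eq_or_ne u 0
  · simp
  obtain ⟨v, hv, z, hz, hvz⟩ := AddSubgroup.mem_sup.mp (h u (x * u))
  have hlie : ⁅u, x⁆ * u = v + z := by rw [hvz]; simp only [Ring.lie_def]; noncomm_ring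
  have hzu : u * z * u⁻¹ = z := by
    rw [Subring.mem_center_iff.mp hz u, mul_inv_cancel_right₀ hu]
  have hconj : ⁅u, ⁅u, x⁆⁆ = u * v * u⁻¹ - v := by
    calc ⁅u, ⁅u, x⁆⁆ = u * (⁅u, x⁆ * u) * u⁻¹ - ⁅u, x⁆ * u := by
          rw [← mul_assoc, mul_inv_cancel_right₀ hu]; rfl
      _ = u * v * u⁻¹ - v := by rw [hlie, mul_add, add_mul, hzu, add_sub_add_right_eq_sub]
  exact hconj ▸ V.sub_mem (hV.conj_mem hu hv) hv

/-- Polarizing the hypothesis makes `⁅u, ⁅w, x⁆⁆` antisymmetric modulo `V` in `u` and `w`, hence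
alternating in all three arguments, and the Jacobi identity collapses. -/
theorem three_mul_lie_lie_mem {V : AddSubgroup D} (h : ∀ u x : D, ⁅u, ⁅u, x⁆⁆ ∈ V) (u w x : D) :
    3 * ⁅u, ⁅w, x⁆⁆ ∈ V := by
  have hsymm (u w x : D) : ⁅u, ⁅w, x⁆⁆ + ⁅w, ⁅u, x⁆⁆ ∈ V := by
    have hpol : ⁅u, ⁅w, x⁆⁆ + ⁅w, ⁅u, x⁆⁆ = ⁅u + w, ⁅u + w, x⁆⁆ - ⁅u, ⁅u, x⁆⁆ - ⁅w, ⁅w, x⁆⁆ := by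
      simp only [add_lie, lie_add]; abel
    exact hpol ▸ V.sub_mem (V.sub_mem (h _ _) (h _ _)) (h _ _)
  have hjac : 3 * ⁅u, ⁅w, x⁆⁆ = (⁅u, ⁅w, x⁆⁆ + ⁅w, ⁅u, x⁆⁆) - (⁅x, ⁅u, w⁆⁆ + ⁅u, ⁅x, w⁆⁆) := by
    simp only [Ring.lie_def]; noncomm_ring
  exact hjac ▸ V.sub_mem (hsymm u w x) (hsymm x u w)

theorem lie_lie_lie_eq_lie_pow_three (h3 : (3 : D) = 0) (u x : D) :
    ⁅u, ⁅u, ⁅u, x⁆⁆⁆ = ⁅u ^ 3, x⁆ := by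
  have h : ⁅u, ⁅u, ⁅u, x⁆⁆⁆ = ⁅u ^ 3, x⁆ - 3 * (u * u * x * u - u * x * u * u) := by
    simp only [Ring.lie_def]; noncomm_ring
  rw [h, h3, zero_mul, sub_zero]

theorem exists_mul_eq_add_one_mul {u x : D} (hx : ⁅u, x⁆ ≠ 0) (hux : ⁅u, ⁅u, x⁆⁆ = 0) :
    ∃ y, u * y = (y + 1) * u := by
  have hcomm : u * ⁅u, x⁆⁻¹ = ⁅u, x⁆⁻¹ * u :=
    (show Commute u ⁅u, x⁆ from sub_eq_zero.mp hux).inv_right₀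
  have hmul : u * x = ⁅u, x⁆ + x * u := by simp [Ring.lie_def]
  refine ⟨x * ⁅u, x⁆⁻¹ * u, ?_⟩
  calc u * (x * ⁅u, x⁆⁻¹ * u) = u * x * ⁅u, x⁆⁻¹ * u := by simp only [mul_assoc]
    _ = ⁅u, x⁆ * ⁅u, x⁆⁻¹ * u + x * (u * ⁅u, x⁆⁻¹) * u := by
      nth_rw 1 [hmul]; simp only [add_mul, mul_assoc]
    _ = (x * ⁅u, x⁆⁻¹ * u + 1) * u := by
      rw [mul_inv_cancel₀ hx, hcomm, add_comm]; simp only [add_mul, mul_assoc]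

theorem exists_pow_three_notMem_center (h3 : (3 : D) = 0) (ha : a ∉ Subring.center D) :
    ∃ v : D, v ^ 3 ∉ Subring.center D := by
  by_contra! h
  obtain ⟨x, hx, hax⟩ : ∃ x : D, ⁅a, x⁆ ≠ 0 ∧ ⁅a, ⁅a, x⁆⁆ = 0 := by
    obtain ⟨x, hx⟩ := exists_lie_ne_zero ha
    by_cases hax : ⁅a, ⁅a, x⁆⁆ = 0
    · exact ⟨x, hx, hax⟩
    · refine ⟨⁅a, x⁆, hax, ?_⟩
      rw [lie_lie_lie_eq_lie_pow_three h3, Ring.lie_def, sub_eq_zero]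
      exact (Subring.mem_center_iff.mp (h a) x).symm
  obtain ⟨y, hy⟩ := exists_mul_eq_add_one_mul hx hax
  -- conjugation by `a` sends `y` to `y + 1`, hence `y ^ 3` to `y ^ 3 + 1`
  have hcube : a * y ^ 3 = (y ^ 3 + 1) * a := by
    have hcancel : (y + 1) ^ 3 = y ^ 3 + 1 := by
      have : (y + 1) ^ 3 = y ^ 3 + 1 + 3 * (y ^ 2 + y) := by noncomm_ring
      rw [this, h3, zero_mul, add_zero]
    rw [← hcancel]
    exact (show SemiconjBy a y (y + 1) from hy).pow_right 3
  rw [Subring.mem_center_iff.mp (h y) a, add_one_mul, left_eq_add] at hcube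
  exact ha (hcube ▸ zero_mem _)

theorem lie_mem_of_lie_mem_sup_center {V : AddSubgroup D} (hV : ConjInvariant (V : Set D))
    (ha : a ∉ Subring.center D) (h : ∀ x, ⁅a, x⁆ ∈ V ⊔ (Subring.center D).toAddSubgroup)
    (x y : D) : ⁅x, y⁆ ∈ V := by
  have hsup := lie_mem_of_lie_mem (hV.sup ConjInvariant.center) ha h
  have hlie := lie_lie_mem_of_lie_mem_sup_center hV hsup
  by_cases h3 : (3 : D) = 0
  · obtain ⟨v, hv⟩ := exists_pow_three_notMem_center h3 ha
    exact lie_mem_of_lie_mem hV hv (fun x ↦ lie_lie_lie_eq_lie_pow_three h3 v x ▸ hlie v _) x y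
  · obtain ⟨b, c, hbc⟩ := exists_lie_lie_ne_zero ha
    have hnc : ⁅b, c⁆ ∉ Subring.center D := fun hz ↦ hbc (lie_eq_zero_of_mem_center hz a)
    refine lie_mem_of_lie_mem hV hnc (fun x ↦ ?_) x y
    have hx : ⁅⁅b, c⁆, x⁆ = 3 * ⁅-(3⁻¹ * x), ⁅b, c⁆⁆ := by
      have hdiv : ⁅b, c⁆ * 3⁻¹ = 3⁻¹ * ⁅b, c⁆ :=
        (Commute.inv_right₀ (Nat.cast_commute 3 ⁅b, c⁆).symm)
      rw [neg_lie, mul_neg, ← lie_skew, neg_inj, Ring.lie_def x]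
      rw [Ring.lie_def (3⁻¹ * x), ← mul_assoc ⁅b, c⁆, hdiv, mul_assoc, mul_assoc, ← mul_sub,
        mul_inv_cancel_left₀ h3]
    exact hx ▸ three_mul_lie_lie_mem hlie _ b c

theorem eq_top_of_lie_mem_of_mul_lie_mem {A : AddSubgroup D} {p q : D} (hpq : ⁅p, q⁆ ≠ 0)
    (hp : ∀ x, ⁅p, x⁆ ∈ A) (hq : ∀ x, q * ⁅p, x⁆ ∈ A) : A = ⊤ := by
  refine (AddSubgroup.eq_top_iff' A).mpr fun x ↦ ?_
  have hx : x = ⁅p, q * (⁅p, q⁆⁻¹ * x)⁆ - q * ⁅p, ⁅p, q⁆⁻¹ * x⁆ := by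
    nth_rw 1 [← mul_inv_cancel_left₀ hpq x]
    generalize ⁅p, q⁆⁻¹ * x = y
    simp only [Ring.lie_def]; noncomm_ring
  exact hx ▸ A.sub_mem (hp _) (hq _)

theorem eq_top_of_mul_mem {V A : AddSubgroup D} (hV : ConjInvariant (V : Set D))
    (ha : a ∉ Subring.center D) (h : ∀ x, ⁅a, x⁆ ∈ V ⊔ (Subring.center D).toAddSubgroup)
    (hmul : ∀ v ∈ V, ∀ w ∈ V, v * w ∈ A) : A = ⊤ := by
  have hlie (x y : D) : ⁅x, y⁆ ∈ V := lie_mem_of_lie_mem_sup_center hV ha h x y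
  obtain ⟨x, y, hac⟩ := exists_lie_lie_ne_zero ha
  set c := ⁅x, y⁆
  have hc : c ∉ Subring.center D := fun hz ↦ hac (lie_eq_zero_of_mem_center hz a)
  obtain ⟨x', y', hcd⟩ := exists_lie_lie_ne_zero hc
  set d := ⁅x', y'⁆
  have hcV : c ∈ V := hlie x y
  have hdV : d ∈ V := hlie x' y'
  by_cases he : ⁅c, d⁆ ∈ Subring.center D
  · have hone : 1 ∈ V := by
      have hinv : ⁅⁅c, d⁆⁻¹ * c, d⁆ = 1 := by
        have hcomm : d * ⁅c, d⁆⁻¹ = ⁅c, d⁆⁻¹ * d :=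
          (show Commute d ⁅c, d⁆ from Subring.mem_center_iff.mp he d).inv_right₀
        rw [Ring.lie_def, ← mul_assoc d, hcomm, mul_assoc, mul_assoc, ← mul_sub]
        exact inv_mul_cancel₀ hcd
      exact hinv ▸ hlie _ _
    refine eq_top_of_lie_mem_of_mul_lie_mem hcd (fun z ↦ ?_) fun z ↦ hmul d hdV _ (hlie c z)
    simpa using hmul 1 hone _ (hlie c z)
  · obtain ⟨x'', y'', hq⟩ := exists_lie_lie_ne_zero he
    refine eq_top_of_lie_mem_of_mul_lie_mem hq (fun z ↦ ?_) fun z ↦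
      hmul _ (hlie x'' y'') _ (hlie _ z)
    have hcomm {v w : D} (hv : v ∈ V) (hw : w ∈ V) : ⁅v, w⁆ ∈ A :=
      A.sub_mem (hmul v hv w hw) (hmul w hw v hv)
    have hjac : ⁅⁅c, d⁆, z⁆ = ⁅c, ⁅d, z⁆⁆ - ⁅d, ⁅c, z⁆⁆ := lie_lie c d z
    exact hjac ▸ A.sub_mem (hcomm hcV (hlie d z)) (hcomm hdV (hlie c z))

end DivisionRing

section HomogeneousForm

variable {F X A : Type*} [CommRing F] [Ring A] [Algebra F A]

theorem lie_prod_ofFn {m : ℕ} (w : Fin m → A) (y : A) :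
    ⁅(List.ofFn w).prod, y⁆ = ∑ k, (List.ofFn (Function.update w k ⁅w k, y⁆)).prod := by
  induction m with
  | zero => simp [Ring.lie_def]
  | succ m ih =>
    have htail (k : Fin m) : (List.ofFn (Function.update w k.succ ⁅w k.succ, y⁆)).prod =
        w 0 * (List.ofFn (Function.update (fun j ↦ w j.succ) k ⁅w k.succ, y⁆)).prod := by
      rw [List.ofFn_succ, List.prod_cons, Function.update_of_ne (Fin.succ_ne_zero k).symm]
      congr 3
      exact Function.update_comp_eq_of_injective w (Fin.succ_injective m) k _
    simp only [Fin.sum_univ_succ, htail, ← Finset.mul_sum, ← ih fun j ↦ w j.succ]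
    simp only [List.ofFn_succ, List.prod_cons, Function.update_self,
      Function.update_of_ne (Fin.succ_ne_zero _), Ring.lie_def]
    noncomm_ring

variable (F X) in
/-- The basis of the free algebra consisting of the words in the variables, a word of length `m`
being encoded as a function on `Fin m`. -/
noncomputable def wordBasis : Module.Basis ((m : ℕ) × (Fin m → X)) F (FreeAlgebra F X) :=
  (FreeAlgebra.basisFreeMonoid F X).reindex (FreeMonoid.toList.trans List.equivSigmaTuple)

/-- The coefficients in `f` of the words of length `m`. -/
noncomputable def wordCoeff (f : FreeAlgebra F X) (m : ℕ) : (Fin m → X) →₀ F :=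
  ((wordBasis F X).repr f).split m

/-- The lengths of the words occurring in `f`. -/
noncomputable def wordLengths (f : FreeAlgebra F X) : Finset ℕ :=
  ((wordBasis F X).repr f).splitSupport

theorem wordBasis_apply (s : (m : ℕ) × (Fin m → X)) :
    wordBasis F X s = (List.ofFn fun j ↦ FreeAlgebra.ι F (s.2 j)).prod := by
  simp [wordBasis, FreeAlgebra.basisFreeMonoid, FreeAlgebra.equivMonoidAlgebraFreeMonoid,
    List.equivSigmaTuple, FreeMonoid.lift_apply, List.map_ofFn, Function.comp_def]

variable (A) in
/-- The multilinear form `(v₁, …, v_m) ↦ ∑ c_s v₁(s₁) ⋯ v_m(s_m)`, where `s` runs over the words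
of length `m` and `c_s` is the coefficient of `s` in `f`. Its restriction to the diagonal is the
evaluation of the homogeneous component of degree `m` of `f`. -/
noncomputable def homogeneousForm (f : FreeAlgebra F X) (m : ℕ) :
    MultilinearMap F (fun _ : Fin m ↦ X → A) A :=
  (wordCoeff f m).sum fun s c ↦
    c • (MultilinearMap.mkPiAlgebraFin F m A).compLinearMap fun j ↦ LinearMap.proj (s j)

theorem homogeneousForm_apply (f : FreeAlgebra F X) {m : ℕ} (v : Fin m → X → A) :
    homogeneousForm A f m v =
      (wordCoeff f m).sum fun s c ↦ c • (List.ofFn fun j ↦ v j (s j)).prod := by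
  simp [homogeneousForm, Finsupp.sum]

theorem lift_eq_sum_homogeneousForm (f : FreeAlgebra F X) (x : X → A) :
    FreeAlgebra.lift F x f = ∑ m ∈ wordLengths f, homogeneousForm A f m fun _ ↦ x := by
  simp only [homogeneousForm_apply, wordCoeff, wordLengths]
  rw [← Finsupp.sigma_sum _ fun (s : (m : ℕ) × (Fin m → X)) c ↦
    c • (List.ofFn fun j ↦ x (s.2 j)).prod]
  conv_lhs => rw [← (wordBasis F X).linearCombination_repr f]
  simp [Finsupp.linearCombination_apply, Finsupp.sum, wordBasis_apply, map_list_prod,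
    List.map_ofFn, Function.comp_def]

theorem linearDeriv_homogeneousForm_lie (f : FreeAlgebra F X) {m : ℕ} (v : Fin m → X → A) (y : A) :
    (homogeneousForm A f m).linearDeriv v (fun k i ↦ ⁅v k i, y⁆) =
      ⁅homogeneousForm A f m v, y⁆ := by
  simp only [MultilinearMap.linearDeriv_apply, homogeneousForm_apply, Finsupp.sum]
  rw [Finset.sum_comm, sum_lie]
  refine Finset.sum_congr rfl fun s _ ↦ ?_
  rw [← Finset.smul_sum, Ring.lie_def, smul_mul_assoc, mul_smul_comm, ← smul_sub, ← Ring.lie_def,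
    lie_prod_ofFn]
  congr! 4 with k
  ext j
  obtain rfl | hjk := eq_or_ne j k
  · simp
  · simp [hjk]

end HomogeneousForm

section InfiniteField

variable {F : Type*} [Field F] [Infinite F]

theorem exists_pow_ne_pow {a b : ℕ} (hab : a ≠ b) : ∃ l : F, l ^ a ≠ l ^ b := by
  by_contra! h
  refine hab (?_ : a = b)
  have hX : (Polynomial.X ^ a : Polynomial F) = Polynomial.X ^ b :=
    Polynomial.funext fun l ↦ by simpa using h l
  simpa using congrArg Polynomial.natDegree hX

theorem mem_of_forall_sum_pow_smul_mem {M : Type*} [AddCommGroup M] [Module F M]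
    (W : Submodule F M) {N : ℕ} {c : ℕ → M} (h : ∀ r : F, ∑ j ∈ Finset.range N, r ^ j • c j ∈ W)
    {j : ℕ} (hj : j < N) : c j ∈ W := by
  rw [← Submodule.Quotient.mk_eq_zero, ← Module.forall_dual_apply_eq_zero_iff F]
  intro φ
  have hpoly : ∑ i ∈ Finset.range N, Polynomial.monomial i (φ (W.mkQ (c i))) = 0 := by
    refine Polynomial.funext fun r ↦ ?_
    have hr : φ (W.mkQ (∑ i ∈ Finset.range N, r ^ i • c i)) = 0 := by
      rw [W.mkQ_apply, (Submodule.Quotient.mk_eq_zero W).mpr (h r), map_zero]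
    simpa [Polynomial.eval_finsetSum, mul_comm] using hr
  simpa [Polynomial.finsetSum_coeff, Polynomial.coeff_monomial, hj]
    using congrArg (Polynomial.coeff · j) hpoly

end InfiniteField

section Elimination

variable {F G ι M : Type*} [Field F] [CommMonoid G]

theorem exists_lift_eq_zero_and_ne_zero (χ : ι → G →* F) (i : ι) (s : Finset ι)
    (hs : ∀ k ∈ s, ∃ g h, χ k g = χ k h ∧ χ i g ≠ χ i h) :
    ∃ θ : MonoidAlgebra ℤ G, MonoidAlgebra.lift ℤ F G (χ i) θ ≠ 0 ∧
      ∀ k ∈ s, MonoidAlgebra.lift ℤ F G (χ k) θ = 0 := by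
  choose! g h heq hne using hs
  refine ⟨∏ k ∈ s, (MonoidAlgebra.of ℤ G (g k) - MonoidAlgebra.of ℤ G (h k)), ?_, fun k hk ↦ ?_⟩
  · rw [map_prod]
    refine Finset.prod_ne_zero_iff.mpr fun k hk ↦ ?_
    simpa [sub_eq_zero] using hne k hk
  · rw [map_prod]
    exact Finset.prod_eq_zero hk (by simp [heq k hk])

theorem sum_lift_smul_mem [AddCommGroup M] [Module F M] (V : AddSubgroup M) (χ : ι → G →* F)
    (s : Finset ι) {c : ι → M} (hV : ∀ g, ∑ k ∈ s, χ k g • c k ∈ V) (θ : MonoidAlgebra ℤ G) :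
    ∑ k ∈ s, MonoidAlgebra.lift ℤ F G (χ k) θ • c k ∈ V := by
  induction θ using MonoidAlgebra.induction_on with
  | of g => simpa using hV g
  | add θ η hθ hη => simpa [add_smul, Finset.sum_add_distrib] using add_mem hθ hη
  | smul n θ hθ =>
    have h : ∑ k ∈ s, MonoidAlgebra.lift ℤ F G (χ k) (n • θ) • c k =
        n • ∑ k ∈ s, MonoidAlgebra.lift ℤ F G (χ k) θ • c k := by
      simp only [map_zsmul, smul_assoc, Finset.smul_sum]
    exact h ▸ zsmul_mem hθ n

end Elimination

section LineCoeff

variable {F E A : Type*} [Field F] [AddCommGroup E] [Module F E] [Ring A] [Algebra F A] {m : ℕ}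

/-- The coefficient of `r ^ j` in the expansion of `T (x + r • w, …, x + r • w)`. -/
def lineCoeff (T : MultilinearMap F (fun _ : Fin m ↦ E) A) (x w : E) (j : ℕ) : A :=
  ∑ s ∈ Finset.powersetCard j Finset.univ, T (s.piecewise (fun _ ↦ w) fun _ ↦ x)

theorem sum_pow_smul_lineCoeff (T : MultilinearMap F (fun _ : Fin m ↦ E) A) (x w : E) (r : F)
    {N : ℕ} (hN : m < N) :
    ∑ j ∈ Finset.range N, r ^ j • lineCoeff T x w j = T fun _ ↦ x + r • w := by
  have hpiece (s : Finset (Fin m)) : T (s.piecewise (fun _ ↦ r • w) fun _ ↦ x) =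
      r ^ s.card • T (s.piecewise (fun _ ↦ w) fun _ ↦ x) := by
    rw [← Finset.prod_const, ← T.map_piecewise_smul]
    congr 1
    ext k
    by_cases hk : k ∈ s <;> simp [hk]
  have hrange : ∑ j ∈ Finset.range N, r ^ j • lineCoeff T x w j =
      ∑ j ∈ Finset.range (m + 1), r ^ j • lineCoeff T x w j := by
    refine (Finset.sum_subset (Finset.range_mono hN) fun j _ hj ↦ ?_).symm
    have hmj : m < j := by simpa using hj
    rw [lineCoeff, Finset.powersetCard_eq_empty.mpr (by simpa), Finset.sum_empty, smul_zero]
  have hadd : (fun _ : Fin m ↦ x + r • w) = (fun _ ↦ r • w) + fun _ ↦ x := by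
    ext; exact add_comm _ _
  rw [hrange, hadd, T.map_add_univ, ← Finset.powerset_univ, Finset.sum_powerset,
    Finset.card_univ, Fintype.card_fin]
  refine Finset.sum_congr rfl fun j _ ↦ ?_
  rw [lineCoeff, Finset.smul_sum]
  refine Finset.sum_congr rfl fun s hs ↦ ?_
  rw [hpiece, (Finset.mem_powersetCard.mp hs).2]

theorem lineCoeff_one (T : MultilinearMap F (fun _ : Fin m ↦ E) A) (x w : E) :
    lineCoeff T x w 1 = T.linearDeriv (fun _ ↦ x) fun _ ↦ w := by
  simp [lineCoeff, Finset.powersetCard_one, Finset.piecewise_singleton,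
    MultilinearMap.linearDeriv_apply]

theorem lineCoeff_mem_center [Infinite F] {T : MultilinearMap F (fun _ : Fin m ↦ E) A}
    (hT : ∀ x, T (fun _ ↦ x) ∈ Subalgebra.center F A) (x w : E) {j N : ℕ} (hj : j < N)
    (hN : m < N) : lineCoeff T x w j ∈ Subalgebra.center F A :=
  mem_of_forall_sum_pow_smul_mem (Subalgebra.toSubmodule (Subalgebra.center F A))
    (fun r ↦ by rw [sum_pow_smul_lineCoeff T x w r hN]; exact hT _) hj

end LineCoeff

section InfiniteCenter

variable {F X A : Type*} [Field F] [Ring A] [Algebra F A]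

/-- The character `(t, r) ↦ t ^ m * r ^ j`, where `k = (m, j)`. -/
def bidegreeChar (F : Type*) [Field F] (k : ℕ × ℕ) : F × F →* F :=
  (powMonoidHom k.1).coprod (powMonoidHom k.2)

theorem exists_bidegreeChar_eq_and_ne [Infinite F] {d : ℕ} {k : ℕ × ℕ} (hk : k.1 ≠ d * k.2) :
    ∃ g h : F × F, bidegreeChar F k g = bidegreeChar F k h ∧
      bidegreeChar F (d, 1) g ≠ bidegreeChar F (d, 1) h := by
  obtain ⟨l, hl⟩ := exists_pow_ne_pow (F := F) hk
  refine ⟨(l ^ k.2, 1), (1, l ^ k.1), ?_, ?_⟩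
  · simp [bidegreeChar, ← pow_mul, mul_comm]
  · simpa [bidegreeChar, ← pow_mul, mul_comm] using hl.symm

/-- Additive combinations of the values of `(t, r) ↦ ∑ t ^ m * r ^ j • c (m, j)` isolate the
coefficient at `(d, 1)` up to a scalar and up to the coefficients at the multiples of `(d, 1)`. -/
theorem exists_bidegree_elimination [Infinite F] {M : Type*} [AddCommGroup M] [Module F M]
    (V : AddSubgroup M) (d : ℕ) (K : Finset (ℕ × ℕ)) :
    ∃ κ : ℕ × ℕ → F, κ (d, 1) ≠ 0 ∧ (∀ k ∈ K, k.1 ≠ d * k.2 → κ k = 0) ∧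
      ∀ c : ℕ × ℕ → M, (∀ g, ∑ k ∈ K, bidegreeChar F k g • c k ∈ V) → ∑ k ∈ K, κ k • c k ∈ V := by
  obtain ⟨θ, hθ, hθ₀⟩ := exists_lift_eq_zero_and_ne_zero (bidegreeChar F) (d, 1)
    {k ∈ K | k.1 ≠ d * k.2} fun k hk ↦ exists_bidegreeChar_eq_and_ne (Finset.mem_filter.mp hk).2
  exact ⟨fun k ↦ MonoidAlgebra.lift ℤ F (F × F) (bidegreeChar F k) θ, hθ,
    fun k hk hdk ↦ hθ₀ k (Finset.mem_filter.mpr ⟨hk, hdk⟩),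
    fun c hc ↦ sum_lift_smul_mem V (bidegreeChar F) K hc θ⟩

theorem sum_bidegreeChar_smul_lineCoeff (f : FreeAlgebra F X) (x w : X → A) (g : F × F) {N : ℕ}
    (hN : ∀ m ∈ wordLengths f, m < N) :
    ∑ k ∈ wordLengths f ×ˢ Finset.range N,
      bidegreeChar F k g • lineCoeff (homogeneousForm A f k.1) x w k.2 =
      FreeAlgebra.lift F (g.1 • (x + g.2 • w)) f := by
  rw [Finset.sum_product, lift_eq_sum_homogeneousForm]
  refine Finset.sum_congr rfl fun m hm ↦ ?_
  have hsmul := (homogeneousForm A f m).map_smul_univ (fun _ ↦ g.1) fun _ ↦ x + g.2 • w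
  rw [hsmul, ← sum_pow_smul_lineCoeff _ _ _ _ (hN m hm), Finset.smul_sum]
  simp [bidegreeChar, mul_smul]

theorem homogeneousForm_zero_mem_center (f : FreeAlgebra F X) (v : Fin 0 → X → A) :
    homogeneousForm A f 0 v ∈ Subalgebra.center F A := by
  rw [homogeneousForm_apply]
  refine sum_mem fun s _ ↦ ?_
  simpa using Subalgebra.smul_mem _ (one_mem _) _

theorem exists_maximal_noncentral_homogeneousForm {f : FreeAlgebra F X} {x : X → A}
    (hx : FreeAlgebra.lift F x f ∉ Subring.center A) :
    ∃ d ∈ wordLengths f, 0 < d ∧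
      (∃ x : X → A, homogeneousForm A f d (fun _ ↦ x) ∉ Subring.center A) ∧
      ∀ m ∈ wordLengths f, d < m →
        ∀ x : X → A, homogeneousForm A f m (fun _ ↦ x) ∈ Subring.center A := by
  classical
  set S := {m ∈ wordLengths f | ∃ x : X → A, homogeneousForm A f m (fun _ ↦ x) ∉ Subring.center A}
  have hne : S.Nonempty := by
    by_contra! hempty
    rw [Finset.filter_eq_empty_iff] at hempty
    push Not at hempty
    exact hx (lift_eq_sum_homogeneousForm f x ▸ sum_mem fun m hm ↦ hempty hm x)
  obtain ⟨hd, x, hdx⟩ := Finset.mem_filter.mp (S.max'_mem hne)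
  refine ⟨S.max' hne, hd, ?_, ⟨x, hdx⟩, fun m hm hdm ↦ ?_⟩
  · refine Nat.pos_of_ne_zero fun h ↦ hdx ?_
    rw [h]
    exact homogeneousForm_zero_mem_center f _
  · by_contra! h
    exact (S.le_max' m (Finset.mem_filter.mpr ⟨hm, h⟩)).not_gt hdm

theorem lineCoeff_homogeneousForm_mem_center [Infinite F] {f : FreeAlgebra F X} {d m j N : ℕ}
    (hd : 0 < d) (hcentral : d < m → ∀ x : X → A, homogeneousForm A f m (fun _ ↦ x) ∈
      Subring.center A) (hm : m = d * j) (hj : j ≠ 1) (hjN : j < N) (hmN : m < N) (x w : X → A) :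
    lineCoeff (homogeneousForm A f m) x w j ∈ Subring.center A := by
  refine lineCoeff_mem_center (F := F) (fun x ↦ ?_) x w hjN hmN
  obtain rfl | hj₀ := Nat.eq_zero_or_pos j
  · obtain rfl : m = 0 := hm
    exact homogeneousForm_zero_mem_center f _
  · exact hcentral (hm ▸ lt_mul_of_one_lt_right hd (by omega)) x

theorem exists_lie_mem_sup_center_of_infinite [Infinite F] {f : FreeAlgebra F X} {x : X → A}
    (hx : FreeAlgebra.lift F x f ∉ Subring.center A) {V : AddSubgroup A}
    (hV : ∀ x : X → A, FreeAlgebra.lift F x f ∈ V) :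
    ∃ a ∉ Subring.center A, ∀ y, ⁅a, y⁆ ∈ V ⊔ (Subring.center A).toAddSubgroup := by
  obtain ⟨d, hdf, hd, ⟨x, hdx⟩, hcentral⟩ := exists_maximal_noncentral_homogeneousForm hx
  refine ⟨_, hdx, fun y ↦ ?_⟩
  set N := (wordLengths f).sup id + 1
  have hN (m) (hm : m ∈ wordLengths f) : m < N := Nat.lt_succ_of_le (Finset.le_sup (f := id) hm)
  set K := wordLengths f ×ˢ Finset.range N
  obtain ⟨κ, hκ, hκ₀, helim⟩ := exists_bidegree_elimination (F := F) V d K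
  set w : X → A := fun i ↦ ⁅x i, (κ (d, 1))⁻¹ • y⁆ with hw
  set c : ℕ × ℕ → A := fun k ↦ lineCoeff (homogeneousForm A f k.1) x w k.2
  have hmem : ∑ k ∈ K, κ k • c k ∈ V :=
    helim c fun g ↦ sum_bidegreeChar_smul_lineCoeff f x w g hN ▸ hV _
  have hrest (k) (hk : k ∈ K.erase (d, 1)) : κ k • c k ∈ Subring.center A := by
    obtain ⟨hne, hkK⟩ := Finset.mem_erase.mp hk
    obtain ⟨hm, hj⟩ := Finset.mem_product.mp hkK
    by_cases hdk : k.1 = d * k.2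
    · refine Subalgebra.smul_mem (Subalgebra.center F A) ?_ _
      exact lineCoeff_homogeneousForm_mem_center hd (hcentral _ hm) hdk
        (fun hj₁ ↦ hne (Prod.ext (by simpa [hj₁] using hdk) hj₁)) (Finset.mem_range.mp hj)
        (hN _ hm) x w
    · rw [hκ₀ k hkK hdk, zero_smul]
      exact zero_mem _
  have hlie : κ (d, 1) • c (d, 1) = ⁅homogeneousForm A f d (fun _ ↦ x), y⁆ := by
    simp only [c, lineCoeff_one, hw, linearDeriv_homogeneousForm_lie]
    rw [Ring.lie_def, mul_smul_comm, smul_mul_assoc, ← smul_sub, smul_inv_smul₀ hκ, Ring.lie_def]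
  have hdK : (d, 1) ∈ K :=
    Finset.mem_product.mpr ⟨hdf, Finset.mem_range.mpr ((Nat.succ_le_of_lt hd).trans_lt (hN d hdf))⟩
  rw [← hlie, ← add_sub_cancel_right (κ (d, 1) • c (d, 1)) (∑ k ∈ K.erase (d, 1), κ k • c k),
    Finset.add_sum_erase K (fun k ↦ κ k • c k) hdK]
  exact sub_mem (AddSubgroup.mem_sup_left hmem) (AddSubgroup.mem_sup_right (sum_mem hrest))

end InfiniteCenter

section MultilinearPolynomial

theorem sum_neg_one_pow_card_compl_smul {ι F M N : Type*} [Fintype ι] [DecidableEq ι] [CommRing F]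
    [AddCommGroup M] [Module F M] [AddCommGroup N] [Module F N] {m : ℕ}
    (T : MultilinearMap F (fun _ : Fin m ↦ M) N) (v : ι → M) :
    ∑ U : Finset ι, (-1 : ℤ) ^ Uᶜ.card • T (fun _ ↦ ∑ k ∈ U, v k) =
      ∑ r : Fin m → ι with r.Surjective, T (v ∘ r) := by
  have hexpand (U : Finset ι) : T (fun _ ↦ ∑ k ∈ U, v k) =
      ∑ r : Fin m → ι, if Uᶜ ⊆ (Finset.univ.image r)ᶜ then T (v ∘ r) else 0 := by
    rw [T.map_sum_finset (fun _ ↦ v) fun _ ↦ U, ← Finset.sum_filter]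
    refine Finset.sum_congr (Finset.ext fun r ↦ ?_) fun _ _ ↦ rfl
    simp [Finset.image_subset_iff]
  have hsign (r : Fin m → ι) :
      ∑ U : Finset ι, (if Uᶜ ⊆ (Finset.univ.image r)ᶜ then (-1 : ℤ) ^ Uᶜ.card else 0) =
        if r.Surjective then 1 else 0 := by
    rw [compl_involutive.bijective.sum_comp fun W : Finset ι ↦
      if W ⊆ (Finset.univ.image r)ᶜ then (-1 : ℤ) ^ W.card else 0, ← Finset.sum_filter,
      Finset.filter_subset_univ, Finset.sum_powerset_neg_one_pow_card]
    simp [← Finset.coe_eq_univ, Set.range_eq_univ]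
  simp only [hexpand, Finset.smul_sum]
  rw [Finset.sum_comm, Finset.sum_filter]
  refine Finset.sum_congr rfl fun r _ ↦ ?_
  simpa [Finset.sum_smul, ite_smul, smul_ite] using congrArg (· • T (v ∘ r)) (hsign r)

variable {F : Type*} [CommRing F] {d : ℕ}

/-- The multilinear polynomial `∑ γ_σ y_{σ(1)} ⋯ y_{σ(d)}`, as a multilinear map on an algebra. -/
noncomputable def permForm (A : Type*) [Ring A] [Algebra F A] (γ : Equiv.Perm (Fin d) → F) :
    MultilinearMap F (fun _ : Fin d ↦ A) A :=
  ∑ σ, γ σ • (MultilinearMap.mkPiAlgebraFin F d A).domDomCongr σ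

variable {A : Type*} [Ring A] [Algebra F A]

theorem permForm_apply (γ : Equiv.Perm (Fin d) → F) (y : Fin d → A) :
    permForm A γ y = ∑ σ, γ σ • (List.ofFn (y ∘ σ)).prod := by
  simp [permForm, Function.comp_def]

theorem lie_permForm (γ : Equiv.Perm (Fin d) → F) (y : Fin d → A) (z : A) :
    ⁅permForm A γ y, z⁆ = ∑ k, permForm A γ (Function.update y k ⁅y k, z⁆) := by
  simp only [permForm_apply]
  rw [Finset.sum_comm, sum_lie]
  refine Finset.sum_congr rfl fun σ _ ↦ ?_
  rw [← Finset.smul_sum, Ring.lie_def, smul_mul_assoc, mul_smul_comm, ← smul_sub, ← Ring.lie_def,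
    lie_prod_ofFn, ← Equiv.sum_comp σ fun k ↦ (List.ofFn (Function.update y k ⁅y k, z⁆ ∘ σ)).prod]
  simp [Function.update_comp_equiv]

theorem permForm_eq_sum_homogeneousForm {X : Type*} [DecidableEq X] (f : FreeAlgebra F X)
    (s : Fin d → X) (y : Fin d → A) :
    permForm A (fun σ ↦ wordCoeff f d (s ∘ σ)) y =
      ∑ σ : Equiv.Perm (Fin d), homogeneousForm A f d ((fun k ↦ Pi.single (s k) (y k)) ∘ σ) := by
  simp only [permForm_apply, homogeneousForm_apply]
  refine Finset.sum_congr rfl fun σ _ ↦ ?_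
  have hword (t : Fin d → X) (hts : t ≠ s ∘ σ) :
      (List.ofFn fun j ↦ (Pi.single (s (σ j)) (y (σ j)) : X → A) (t j)).prod = 0 := by
    obtain ⟨j, hj⟩ := Function.ne_iff.mp hts
    refine List.prod_eq_zero ((List.mem_ofFn' _ _).mpr ⟨j, ?_⟩)
    exact Pi.single_eq_of_ne hj _
  rw [Finsupp.sum, Finset.sum_eq_single (s ∘ σ)]
  · simp [Function.comp_def]
  · intro t _ hts
    simp [hword t hts]
  · intro hs
    rw [Finsupp.notMem_support_iff.mp hs, zero_smul]

theorem permForm_mem {X : Type*} {f : FreeAlgebra F X} {V : AddSubgroup A}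
    (hV : ∀ x : X → A, FreeAlgebra.lift F x f ∈ V) (hdf : d ∈ wordLengths f)
    (hmax : ∀ m ∈ wordLengths f, m ≤ d) (s : Fin d → X) (y : Fin d → A) :
    permForm A (fun σ ↦ wordCoeff f d (s ∘ σ)) y ∈ V := by
  classical
  set v : Fin d → X → A := fun k ↦ Pi.single (s k) (y k)
  have hlow (m) (hm : m ∈ wordLengths f) (hmd : m ≠ d) :
      ∑ r : Fin m → Fin d with r.Surjective, homogeneousForm A f m (v ∘ r) = 0 := by
    rw [Finset.filter_eq_empty_iff.mpr fun r _ hr ↦ ?_, Finset.sum_empty]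
    exact hmd ((hmax m hm).antisymm (by simpa using Fintype.card_le_of_surjective r hr))
  have htop : ∑ r : Fin d → Fin d with r.Surjective, homogeneousForm A f d (v ∘ r) =
      ∑ σ : Equiv.Perm (Fin d), homogeneousForm A f d (v ∘ σ) := by
    refine (Finset.sum_bij (fun (σ : Equiv.Perm (Fin d)) _ ↦ ⇑σ) ?_ ?_ ?_ fun _ _ ↦ rfl).symm
    · exact fun σ _ ↦ Finset.mem_filter.mpr ⟨Finset.mem_univ _, σ.surjective⟩
    · exact fun σ _ τ _ h ↦ DFunLike.coe_injective h
    · intro r hr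
      have hbij := Finite.surjective_iff_bijective.mp (Finset.mem_filter.mp hr).2
      exact ⟨Equiv.ofBijective r hbij, Finset.mem_univ _, rfl⟩
  rw [permForm_eq_sum_homogeneousForm, ← htop, ← Finset.sum_eq_single_of_mem
    (f := fun m ↦ ∑ r : Fin m → Fin d with r.Surjective, homogeneousForm A f m (v ∘ r)) d hdf hlow]
  simp only [← sum_neg_one_pow_card_compl_smul]
  rw [Finset.sum_comm]
  refine sum_mem fun U _ ↦ ?_
  rw [← Finset.smul_sum, ← lift_eq_sum_homogeneousForm]
  exact V.zsmul_mem (hV _) _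

end MultilinearPolynomial

section ScalarExtension

variable {F A K : Type*} [CommRing F] [Ring A] [Algebra F A] [CommRing K] [Algebra F K]

theorem prod_ofFn_tmul {d : ℕ} (a : Fin d → A) (k : Fin d → K) :
    (List.ofFn fun j ↦ a j ⊗ₜ[F] k j).prod = (List.ofFn a).prod ⊗ₜ ∏ j, k j := by
  induction d with
  | zero => simp [Algebra.TensorProduct.one_def]
  | succ d ih => simp [List.ofFn_succ, ih, Fin.prod_univ_succ]

theorem permForm_tmul {d : ℕ} (γ : Equiv.Perm (Fin d) → F) (a : Fin d → A) (k : Fin d → K) :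
    permForm (A ⊗[F] K) γ (fun j ↦ a j ⊗ₜ k j) = permForm A γ a ⊗ₜ ∏ j, k j := by
  simp only [permForm_apply, sum_tmul, ← smul_tmul']
  refine Finset.sum_congr rfl fun σ _ ↦ ?_
  rw [← Equiv.prod_comp σ, ← prod_ofFn_tmul]
  rfl

theorem tmul_mem_center {a : A} (ha : a ∈ Subring.center A) (k : K) :
    a ⊗ₜ[F] k ∈ Subring.center (A ⊗[F] K) := by
  refine Subring.mem_center_iff.mpr fun t ↦ ?_
  induction t with
  | zero => simp
  | tmul b l => simp [Subring.mem_center_iff.mp ha b, mul_comm]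
  | add t u ht hu => rw [add_mul, ht, hu, mul_add]

theorem permForm_mem_center_tensorProduct {d : ℕ} {γ : Equiv.Perm (Fin d) → F}
    (h : ∀ a : Fin d → A, permForm A γ a ∈ Subring.center A) (y : Fin d → A ⊗[F] K) :
    permForm (A ⊗[F] K) γ y ∈ Subring.center (A ⊗[F] K) := by
  classical
  choose S hS using fun j ↦ exists_finset (y j)
  rw [funext hS, MultilinearMap.map_sum_finset _ fun _ (p : A × K) ↦ p.1 ⊗ₜ[F] p.2]
  refine sum_mem fun p _ ↦ ?_
  rw [permForm_tmul]
  exact tmul_mem_center (h _) _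

end ScalarExtension

section Kaplansky

variable {F B M : Type*} [Field F] [Ring B] [Algebra F B] [AddCommGroup M] [Module F M] [Module B M]
  [IsScalarTower F B M]

theorem prod_ofFn_smul_of_shift {d : ℕ} {e : ℕ → M} {r : Fin d → B}
    (hr : ∀ i, ∀ j ≤ d, r i • e j = if j = i + 1 then e i else 0) {m : ℕ} (hm : m ≤ d)
    (w : Fin m → Fin d) :
    (List.ofFn (r ∘ w)).prod • e m = if ∀ j, (w j : ℕ) = j then e 0 else 0 := by
  induction m with
  | zero => simp
  | succ m ih =>
    rw [List.ofFn_succ', List.concat_eq_append, List.prod_append, List.prod_singleton, mul_smul,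
      Function.comp_apply, hr _ _ hm]
    simp only [Fin.forall_fin_succ']
    have hinit := ih (by omega) (w ∘ Fin.castSucc)
    by_cases hlast : (w (Fin.last m) : ℕ) = m
    · simpa [hlast, Function.comp_def] using hinit
    · simp [hlast, Ne.symm hlast]

theorem permForm_smul_of_shift {d : ℕ} {e : ℕ → M} {r : Fin d → B}
    (hr : ∀ i, ∀ j ≤ d, r i • e j = if j = i + 1 then e i else 0) (γ : Equiv.Perm (Fin d) → F) :
    permForm B γ r • e d = γ 1 • e 0 := by
  rw [permForm_apply, Finset.sum_smul, Finset.sum_eq_single_of_mem 1 (Finset.mem_univ _)]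
  · rw [smul_assoc, prod_ofFn_smul_of_shift hr le_rfl, if_pos (fun j ↦ by rfl)]
  · intro σ _ hσ
    rw [smul_assoc, prod_ofFn_smul_of_shift hr le_rfl, if_neg, smul_zero]
    exact fun h ↦ hσ (Equiv.ext fun j ↦ Fin.ext (h j))

theorem exists_smul_eq_of_linearIndependent [IsSimpleModule B M] {e : ℕ → M}
    (he : LinearIndependent (Module.End B M) e) (d i : ℕ) :
    ∃ r : B, ∀ j ≤ d, r • e j = if j = i + 1 then e i else 0 := by
  classical
  obtain ⟨φ, hφ⟩ := LinearMap.exists_extend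
    ((Module.Basis.span he).constr ℕ fun j ↦ if j = i + 1 then e i else 0)
  have hφe (j : ℕ) : φ (e j) = if j = i + 1 then e i else 0 := by
    have hj := LinearMap.congr_fun hφ (Module.Basis.span he j)
    rwa [Module.Basis.constr_basis, LinearMap.comp_apply, Submodule.subtype_apply,
      Module.Basis.span_apply] at hj
  obtain ⟨r, hr⟩ := jacobson_density φ ((Finset.range (d + 1)).image e)
  refine ⟨r, fun j hj ↦ ?_⟩
  rw [← hr _ (Finset.mem_image_of_mem e (Finset.mem_range_succ_iff.mpr hj)), hφe]

-- Kaplansky's argument: matrix units of `End M`, supplied by the density theorem, make exactly one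
-- of the monomials of the polynomial survive on the last vector of an independent family.
theorem exists_permForm_notMem_center [IsSimpleModule B M] {e : ℕ → M}
    (he : LinearIndependent (Module.End B M) e) {d : ℕ} (hd : d ≠ 0)
    {γ : Equiv.Perm (Fin d) → F} (hγ : γ 1 ≠ 0) :
    ∃ r : Fin d → B, permForm B γ r ∉ Subring.center B := by
  classical
  choose r hr using exists_smul_eq_of_linearIndependent he d
  refine ⟨fun i ↦ r i, fun hcenter ↦ ?_⟩
  set c : B := (γ 1)⁻¹ • permForm B γ fun i ↦ r i
  have hce : c • e d = e 0 := by
    rw [smul_assoc, permForm_smul_of_shift (fun i ↦ hr i), inv_smul_smul₀ hγ]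
  have hc : c ∈ Set.center B :=
    Subalgebra.smul_mem (Subalgebra.center F B) hcenter _
  let φ : Module.End B M :=
    { toFun := (c • ·)
      map_add' := smul_add c
      map_smul' := fun b x ↦ by simp only [smul_smul, hc.comm b |>.eq, RingHom.id_apply] }
  have hφ : (1 : Module.End B M) • e 0 = φ • e d := by simpa [φ] using hce.symm
  exact hd (he.eq_of_smul_apply_eq_smul_apply 1 φ 0 d one_ne_zero hφ).symm

theorem exists_linearIndependent_nat_of_not_finite [IsSimpleModule B M]
    (h : ¬ Module.Finite (Module.End B M) M) :
    ∃ e : ℕ → M, LinearIndependent (Module.End B M) e := by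
  classical
  set b := Module.Basis.ofVectorSpace (Module.End B M) M
  have : Infinite (Module.Basis.ofVectorSpaceIndex (Module.End B M) M) :=
    not_finite_iff_infinite.mp fun _ ↦ h (Module.Finite.of_basis b)
  let i := Infinite.natEmbedding (Module.Basis.ofVectorSpaceIndex (Module.End B M) M)
  exact ⟨b ∘ i, b.linearIndependent.comp i i.injective⟩

end Kaplansky

section MaximalCommutative

theorem centralizer_eq_of_maximal {M : Type*} [Mul M] {S : Set M}
    (hS : Maximal (fun T : Set M ↦ T ⊆ T.centralizer) S) : S.centralizer = S := by
  refine subset_antisymm (fun x hx ↦ ?_) hS.prop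
  have hinsert : insert x S ⊆ (insert x S).centralizer := by
    rintro a (rfl | ha) b (rfl | hb)
    exacts [rfl, hx b hb, (hx a ha).symm, hS.prop ha b hb]
  exact hS.eq_of_subset hinsert (Set.subset_insert x S) ▸ Set.mem_insert x S

theorem exists_subalgebra_centralizer_eq (F A : Type*) [CommRing F] [Ring A] [Algebra F A] :
    ∃ K : Subalgebra F A, Subalgebra.centralizer F (K : Set A) = K := by
  obtain ⟨S, hS⟩ := zorn_subset {T : Set A | T ⊆ T.centralizer} fun c hc hchain ↦ by
    refine ⟨⋃₀ c, fun x hx y hy ↦ ?_, fun T hT ↦ Set.subset_sUnion_of_mem hT⟩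
    obtain ⟨T, hT, hxT⟩ := hx
    obtain ⟨U, hU, hyU⟩ := hy
    obtain h | h := hchain.total hT hU
    · exact hc hU (h hxT) y hyU
    · exact hc hT hxT y (h hyU)
  have hSS := centralizer_eq_of_maximal hS
  refine ⟨Subalgebra.centralizer F S, SetLike.coe_injective ?_⟩
  simp [hSS]

end MaximalCommutative

section FiniteCenter

variable {F D : Type*} [Field F] [DivisionRing D] [Algebra F D]

theorem sum_commutator_mul_eq_zero {ι : Type*} {t : Finset ι} {k₀ : D} {b k : ι → D}
    (hb : ∀ z, z * k₀ + ∑ i ∈ t, b i * (z * k i) = 0) (s z : D) :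
    ∑ i ∈ t, (b i * s - s * b i) * (z * k i) = 0 := by
  have hsz := congrArg (s * ·) (hb z)
  simp only [mul_add, Finset.mul_sum, mul_zero] at hsz
  simpa [sub_mul, Finset.sum_sub_distrib, mul_assoc] using
    sub_eq_zero_of_eq ((hb (s * z)).trans hsz.symm)

theorem linearIndependent_mul_right [Algebra.IsCentral F D] {ι : Type*} {k : ι → D}
    (hk : LinearIndependent F k) : LinearIndependent D fun i (z : D) ↦ z * k i := by
  classical
  refine linearIndependent_iff'.mpr fun t ↦ ?_
  induction t using Finset.induction_on with
  | empty => simp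
  | insert i₀ t hi₀ ih =>
    intro a ha
    have hrel (z : D) : a i₀ * (z * k i₀) + ∑ i ∈ t, a i * (z * k i) = 0 := by
      simpa [Finset.sum_insert hi₀] using congrFun ha z
    have h₀ : a i₀ = 0 := by
      by_contra h₀
      set b : ι → D := fun i ↦ (a i₀)⁻¹ * a i
      have hb (z : D) : z * k i₀ + ∑ i ∈ t, b i * (z * k i) = 0 := by
        simpa [b, mul_add, Finset.mul_sum, mul_assoc, h₀] using
          congrArg ((a i₀)⁻¹ * ·) (hrel z)
      have hcentral (i) (hi : i ∈ t) : ∃ c : F, algebraMap F D c = b i := by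
        suffices b i ∈ Subalgebra.center F D from Algebra.mem_bot.mp (Algebra.IsCentral.out this)
        refine Subalgebra.mem_center_iff.mpr fun s ↦ (sub_eq_zero.mp ?_).symm
        exact ih _ (funext fun z ↦ by simpa using sum_commutator_mul_eq_zero hb s z) i hi
      choose! c hc using hcentral
      have hdep : ∑ i ∈ insert i₀ t, (if i = i₀ then 1 else c i) • k i = 0 := by
        rw [Finset.sum_insert hi₀, if_pos rfl, one_smul, ← hb 1, one_mul]
        refine congrArg _ (Finset.sum_congr rfl fun i hi ↦ ?_)
        rw [if_neg (ne_of_mem_of_not_mem hi hi₀), Algebra.smul_def, hc i hi, one_mul]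
      simpa using linearIndependent_iff'.mp hk _ _ hdep i₀ (Finset.mem_insert_self _ _)
    rintro i hi
    obtain rfl | hi := Finset.mem_insert.mp hi
    · exact h₀
    · exact ih a (funext fun z ↦ by simpa [h₀] using hrel z) i hi

section Bimodule

variable {K : Subalgebra F Dᵐᵒᵖ}

attribute [local instance] TensorProduct.Algebra.module

theorem tmul_smul_eq_mul_mul (a : D) (k : K) (z : D) :
    (a ⊗ₜ k : D ⊗[F] K) • z = a * (z * MulOpposite.unop k) :=
  rfl

instance isScalarTower_tensorProduct : IsScalarTower F (D ⊗[F] K) D where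
  smul_assoc c b z := by
    rw [Algebra.smul_def c b, mul_smul, Algebra.TensorProduct.algebraMap_apply,
      tmul_smul_eq_mul_mul, Algebra.smul_def]
    simp

instance isSimpleModule_tensorProduct : IsSimpleModule (D ⊗[F] K) D := by
  refine isSimpleModule_iff_toSpanSingleton_surjective.mpr ⟨inferInstance, fun z hz x ↦ ?_⟩
  refine ⟨(x * z⁻¹) ⊗ₜ 1, ?_⟩
  simp [tmul_smul_eq_mul_mul, hz]

theorem end_tensorProduct_apply (φ : Module.End (D ⊗[F] K) D) (z : D) : φ z = z * φ 1 := by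
  simpa [tmul_smul_eq_mul_mul] using map_smul φ (z ⊗ₜ 1) 1

theorem op_end_tensorProduct_apply_one_mem (φ : Module.End (D ⊗[F] K) D) :
    MulOpposite.op (φ 1) ∈ Subalgebra.centralizer F (K : Set Dᵐᵒᵖ) := by
  refine (Subalgebra.mem_centralizer_iff F).mpr fun k hk ↦ MulOpposite.unop_injective ?_
  have h := map_smul φ (1 ⊗ₜ ⟨k, hk⟩) 1
  rw [tmul_smul_eq_mul_mul, tmul_smul_eq_mul_mul, end_tensorProduct_apply] at h
  simpa using h.symm

theorem smul_eq_zero_of_span_end_eq_top {c : D ⊗[F] K} {t : Set D}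
    (ht : Submodule.span (Module.End (D ⊗[F] K) D) t = ⊤) (hc : ∀ e ∈ t, c • e = 0) (z : D) :
    c • z = 0 :=
  LinearMap.congr_fun (LinearMap.ext_on (f := Module.toModuleEnd (Module.End (D ⊗[F] K) D) D c)
    (g := 0) ht hc) z

theorem linearIndependent_unop_coe {ι : Type*} {k : ι → K} (hk : LinearIndependent F k) :
    LinearIndependent F fun i ↦ MulOpposite.unop (k i : Dᵐᵒᵖ) := by
  have hcoe := hk.map' K.val.toLinearMap (LinearMap.ker_eq_bot.mpr Subtype.val_injective)
  exact hcoe.map' _ (MulOpposite.opLinearEquiv F (M := D)).symm.ker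

theorem finite_of_finite_end_tensorProduct [Algebra.IsCentral F D]
    [Module.Finite (Module.End (D ⊗[F] K) D) D] : Module.Finite F K := by
  obtain ⟨t, ht⟩ := Module.Finite.fg_top (R := Module.End (D ⊗[F] K) D) (M := D)
  set b := Module.Basis.ofVectorSpace F K
  have hb := linearIndependent_mul_right (linearIndependent_unop_coe b.linearIndependent)
  have hind : LinearIndependent D fun i (e : t) ↦ (e : D) * MulOpposite.unop (b i : Dᵐᵒᵖ) := by
    refine linearIndependent_iff'.mpr fun s a ha ↦
      linearIndependent_iff'.mp hb s a (funext fun z ↦ ?_)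
    have hsmul (z : D) : (∑ i ∈ s, a i ⊗ₜ b i : D ⊗[F] K) • z =
        ∑ i ∈ s, a i * (z * MulOpposite.unop (b i : Dᵐᵒᵖ)) := by
      simp only [Finset.sum_smul, tmul_smul_eq_mul_mul]
    have hzero := smul_eq_zero_of_span_end_eq_top ht (c := ∑ i ∈ s, a i ⊗ₜ b i)
      (fun e he ↦ by simpa [hsmul] using congrFun ha ⟨e, he⟩) z
    simpa [hsmul] using hzero
  have := hind.finite_of_isNoetherian
  exact Module.Finite.of_basis b

theorem not_finite_end_tensorProduct [Finite F] [Infinite D] [Algebra.IsCentral F D]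
    (hK : Subalgebra.centralizer F (K : Set Dᵐᵒᵖ) = K) :
    ¬ Module.Finite (Module.End (D ⊗[F] K) D) D := by
  intro hfinite
  have := finite_of_finite_end_tensorProduct (F := F) (K := K)
  have : Finite K := Module.finite_of_finite F
  have : Finite (Module.End (D ⊗[F] K) D) := by
    refine Finite.of_injective (β := K)
      (fun φ ↦ ⟨MulOpposite.op (φ 1), hK.le (op_end_tensorProduct_apply_one_mem φ)⟩) fun φ ψ h ↦ ?_
    have h₁ : φ 1 = ψ 1 := MulOpposite.op_injective (congrArg Subtype.val h)
    exact LinearMap.ext fun z ↦ by rw [end_tensorProduct_apply, h₁, ← end_tensorProduct_apply]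
  exact not_finite_iff_infinite.mpr ‹_› (Module.finite_of_finite (Module.End (D ⊗[F] K) D))

variable (D) in
theorem exists_permForm_notMem_center_of_finite [Finite F] [Infinite D] [Algebra.IsCentral F D]
    {d : ℕ} (hd : d ≠ 0) {γ : Equiv.Perm (Fin d) → F} (hγ : γ 1 ≠ 0) :
    ∃ y : Fin d → D, permForm D γ y ∉ Subring.center D := by
  classical
  obtain ⟨K, hK⟩ := exists_subalgebra_centralizer_eq F Dᵐᵒᵖ
  let _ : CommRing K :=
    { (inferInstance : Ring K) with
      mul_comm := fun k l ↦ Subtype.ext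
        ((Subalgebra.mem_centralizer_iff F).mp (hK.ge l.2) k k.2) }
  obtain ⟨e, he⟩ := exists_linearIndependent_nat_of_not_finite (not_finite_end_tensorProduct hK)
  obtain ⟨r, hr⟩ := exists_permForm_notMem_center he hd hγ
  by_contra! h
  exact hr (permForm_mem_center_tensorProduct h r)

end Bimodule

theorem exists_lie_mem_of_finite [Finite F] [Infinite D] [Algebra.IsCentral F D] {X : Type*}
    {f : FreeAlgebra F X} {x : X → D} (hx : FreeAlgebra.lift F x f ∉ Subring.center D)
    {V : AddSubgroup D} (hV : ∀ x : X → D, FreeAlgebra.lift F x f ∈ V) :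
    ∃ a ∉ Subring.center D, ∀ y, ⁅a, y⁆ ∈ V := by
  have hne : (wordLengths f).Nonempty := by
    refine Finset.nonempty_iff_ne_empty.mpr fun h ↦ hx ?_
    simp [lift_eq_sum_homogeneousForm, h, zero_mem]
  set d := (wordLengths f).max' hne
  have hdf : d ∈ wordLengths f := Finset.max'_mem _ hne
  have hmax (m) (hm : m ∈ wordLengths f) : m ≤ d := Finset.le_max' _ m hm
  have hd : d ≠ 0 := by
    refine fun hd ↦ hx ?_
    rw [lift_eq_sum_homogeneousForm]
    refine sum_mem fun m hm ↦ ?_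
    obtain rfl : m = 0 := by have := hmax m hm; omega
    exact homogeneousForm_zero_mem_center f _
  obtain ⟨s, hs⟩ : ∃ s, wordCoeff f d s ≠ 0 :=
    DFunLike.ne_iff.mp (((wordBasis F X).repr f).mem_splitSupport_iff_nonzero d |>.mp hdf)
  obtain ⟨y, hy⟩ := exists_permForm_notMem_center_of_finite D hd
    (γ := fun σ ↦ wordCoeff f d (s ∘ σ)) hs
  refine ⟨_, hy, fun z ↦ ?_⟩
  rw [lie_permForm]
  exact sum_mem fun k _ ↦ permForm_mem hV hdf hmax s _

end FiniteCenter

section EvalImage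

variable {F X R R' : Type*} [CommRing F] [Ring R] [Algebra F R] [Ring R'] [Algebra F R']

/-- The image `f(R)`: the set of all values of the noncommutative polynomial `f` on the algebra
`R`. -/
def evalImage (f : FreeAlgebra F X) (R : Type*) [Ring R] [Algebra F R] : Set R :=
  Set.range fun x : X → R ↦ FreeAlgebra.lift F x f

theorem algHom_lift_apply (φ : R →ₐ[F] R') (x : X → R) (f : FreeAlgebra F X) :
    φ (FreeAlgebra.lift F x f) = FreeAlgebra.lift F (φ ∘ x) f := by
  have h : φ.comp (FreeAlgebra.lift F x) = FreeAlgebra.lift F (φ ∘ x) :=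
    FreeAlgebra.hom_ext (by ext; simp)
  exact congrArg (· f) h

theorem image_evalImage_subset (φ : R →ₐ[F] R') (f : FreeAlgebra F X) :
    φ '' evalImage f R ⊆ evalImage f R' := by
  rintro _ ⟨_, ⟨x, rfl⟩, rfl⟩
  exact ⟨φ ∘ x, (algHom_lift_apply φ x f).symm⟩

theorem image_evalImage (e : R ≃ₐ[F] R') (f : FreeAlgebra F X) :
    e '' evalImage f R = evalImage f R' :=
  (image_evalImage_subset (e : R →ₐ[F] R') f).antisymm fun y hy ↦
    ⟨e.symm y, image_evalImage_subset (e.symm : R' →ₐ[F] R) f ⟨y, hy, rfl⟩, e.apply_symm_apply y⟩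

theorem conjInvariant_evalImage (f : FreeAlgebra F X) : ConjInvariant (evalImage f R) :=
  fun u s hs ↦
  image_evalImage_subset (MulSemiringAction.toAlgHom F R (ConjAct.toConjAct u)) f ⟨s, hs, rfl⟩

theorem map_closure_mul (e : R ≃+* R') (S : Set R) :
    (AddSubgroup.closure (S * S)).map (e : R →+ R') = AddSubgroup.closure (e '' S * e '' S) := by
  rw [AddMonoidHom.map_closure, ← Set.image_mul]
  rfl

end EvalImage

section DivisionRing

variable {F D X : Type*} [Field F] [DivisionRing D] [Algebra F D] [Algebra.IsCentral F D]
  {f : FreeAlgebra F X}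

theorem exists_lie_mem_closure_evalImage_sup_center
    (hf : ¬ evalImage f D ⊆ Subring.center D) :
    ∃ a ∉ Subring.center D, ∀ y, ⁅a, y⁆ ∈
      AddSubgroup.closure (evalImage f D) ⊔ (Subring.center D).toAddSubgroup := by
  obtain ⟨_, ⟨x, rfl⟩, hx⟩ := Set.not_subset.mp hf
  have hV (x : X → D) : FreeAlgebra.lift F x f ∈ AddSubgroup.closure (evalImage f D) :=
    AddSubgroup.subset_closure ⟨x, rfl⟩
  obtain hF | hF := finite_or_infinite F
  · have : Infinite D := by
      refine not_finite_iff_infinite.mp fun _ ↦ hx ?_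
      let _ := littleWedderburn D
      exact Subring.mem_center_iff.mpr fun y ↦ mul_comm y _
    obtain ⟨a, ha, h⟩ := exists_lie_mem_of_finite hx hV
    exact ⟨a, ha, fun y ↦ AddSubgroup.mem_sup_left (h y)⟩
  · exact exists_lie_mem_sup_center_of_infinite hx hV

theorem closure_evalImage_mul_evalImage_eq_top (hf : ¬ evalImage f D ⊆ Set.center D) :
    AddSubgroup.closure (evalImage f D * evalImage f D) = ⊤ := by
  obtain ⟨a, ha, h⟩ := exists_lie_mem_closure_evalImage_sup_center hf
  exact eq_top_of_mul_mem (conjInvariant_evalImage f).closure ha h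
    fun v hv w hw ↦ mul_mem_closure_mul hv hw

end DivisionRing

section TwoElements

theorem exists_perm_apply_eq {α : Type*} {i j k l : α} (hij : i ≠ j) (hkl : k ≠ l) :
    ∃ σ : Equiv.Perm α, σ i = k ∧ σ j = l :=
  MulAction.is_two_pretransitive_iff.mp (Equiv.Perm.isMultiplyPretransitive α 2) hij hkl

theorem card_eq_two_of_forall_eq_or_eq {α : Type*} {a b : α} (hab : a ≠ b)
    (h : ∀ c, c = a ∨ c = b) : Nat.card α = 2 :=
  Nat.card_eq_two_iff.mpr ⟨a, b, hab, Set.eq_univ_of_forall h⟩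

end TwoElements

section Matrix

open Matrix

theorem eq_single_of_forall_eq_or_eq {ι α : Type*} [DecidableEq ι] [Zero α] {i j : ι} (hij : i ≠ j)
    (hall : ∀ k, k = i ∨ k = j) {v : Matrix ι ι α} (hii : v i i = 0) (hji : v j i = 0)
    (hjj : v j j = 0) : v = single i j (v i j) := by
  ext a b
  obtain rfl | rfl := hall a <;> obtain rfl | rfl := hall b <;> simp [*, hij.symm]

theorem eq_top_of_single_mem {ι α : Type*} [Finite ι] [DecidableEq ι] [AddCommGroup α]
    {A : AddSubgroup (Matrix ι ι α)} (h : ∀ i j x, single i j x ∈ A) : A = ⊤ := by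
  have := Fintype.ofFinite ι
  refine (AddSubgroup.eq_top_iff' A).mpr fun v ↦ ?_
  rw [matrix_eq_sum_single v]
  exact sum_mem fun i _ ↦ sum_mem fun j _ ↦ h i j _

variable {ι R D : Type*} [Fintype ι] [DecidableEq ι] [Ring R] [DivisionRing D]

/-- The difference `(1 + E) v (1 - E) - v`, where `E` is the matrix with `x` at the off-diagonal
position `(k, l)`. -/
def transvectionDiff (k l : ι) (x : R) (v : Matrix ι ι R) : Matrix ι ι R :=
  single k l x * v - v * single k l x - single k l x * v * single k l x

theorem transvectionDiff_apply (k l : ι) (x : R) (v : Matrix ι ι R) (a b : ι) :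
    transvectionDiff k l x v a b = (if a = k then x * v l b else 0) -
      (if b = l then v a k * x else 0) - if a = k ∧ b = l then x * v l k * x else 0 := by
  rw [transvectionDiff, single_mul_mul_single]
  obtain rfl | ha := eq_or_ne a k <;> obtain rfl | hb := eq_or_ne b l <;>
    simp [*, Ne.symm]

section ConjInvariant

variable {V : AddSubgroup (Matrix ι ι R)}

theorem transvectionDiff_mem (hV : ConjInvariant (V : Set (Matrix ι ι R))) {k l : ι} (hkl : k ≠ l)
    (x : R) {v : Matrix ι ι R} (hv : v ∈ V) : transvectionDiff k l x v ∈ V := by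
  have hsq : single k l x * single k l x = 0 := single_mul_single_of_ne _ _ _ _ hkl.symm _
  let u : (Matrix ι ι R)ˣ :=
    { val := 1 + single k l x
      inv := 1 - single k l x
      val_inv := by simp [add_mul, mul_sub, hsq]
      inv_val := by simp [sub_mul, mul_add, hsq] }
  convert sub_mem (hV u v hv) hv using 1
  simp only [transvectionDiff, u, Units.inv_mk]
  noncomm_ring

theorem diagonal_conj_mem (hV : ConjInvariant (V : Set (Matrix ι ι R))) (d : ι → Rˣ)
    {v : Matrix ι ι R} (hv : v ∈ V) : of (fun a b ↦ d a * v a b * ↑(d b)⁻¹) ∈ V := by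
  let u : (Matrix ι ι R)ˣ := Units.map (diagonalRingHom ι R) (MulEquiv.piUnits.symm d)
  suffices u * v * (u⁻¹).val = of fun a b ↦ d a * v a b * ↑(d b)⁻¹ from
    this ▸ hV u v hv
  ext a b
  simp [u, ← map_inv]

theorem submatrix_perm_mem (hV : ConjInvariant (V : Set (Matrix ι ι R))) (σ : Equiv.Perm ι)
    {v : Matrix ι ι R} (hv : v ∈ V) : v.submatrix σ σ ∈ V := by
  let u : (Matrix ι ι R)ˣ :=
    { val := σ.permMatrix R
      inv := σ⁻¹.permMatrix R
      val_inv := by simp [← permMatrix_mul]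
      inv_val := by simp [← permMatrix_mul] }
  suffices u * v * (u⁻¹).val = v.submatrix σ σ from
    this ▸ hV u v hv
  ext a b
  simp [u, Equiv.Perm.permMatrix, PEquiv.toMatrix_toPEquiv_mul, PEquiv.mul_toMatrix_toPEquiv,
    Equiv.Perm.inv_def]

end ConjInvariant

variable {V A : AddSubgroup (Matrix ι ι D)}

/-- The subgroup `V` contains a nonzero matrix with a single nonzero entry, off the diagonal. -/
def HasOffDiagonalSingle (V : AddSubgroup (Matrix ι ι D)) : Prop :=
  ∃ i j, i ≠ j ∧ ∃ x ≠ 0, single i j x ∈ V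

theorem HasOffDiagonalSingle.single_mem (h : HasOffDiagonalSingle V)
    (hV : ConjInvariant (V : Set (Matrix ι ι D))) {k l : ι} (hkl : k ≠ l) (y : D) :
    single k l y ∈ V := by
  obtain ⟨i, j, hij, x, hx, hmem⟩ := h
  obtain rfl | hy := eq_or_ne y 0
  · simp [zero_mem]
  have hscaled : single i j y ∈ V := by
    convert diagonal_conj_mem hV (Pi.mulSingle i (Units.mk0 (y * x⁻¹) (by simp [hx, hy]))) hmem
    ext a b
    obtain rfl | ha := eq_or_ne i a <;> obtain rfl | hb := eq_or_ne j b <;>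
      simp [*, hij.symm, single_apply]
  obtain ⟨σ, rfl, rfl⟩ := exists_perm_apply_eq hij hkl
  simpa using submatrix_perm_mem hV σ.symm hscaled

theorem HasOffDiagonalSingle.eq_top_of_mul_mem (h : HasOffDiagonalSingle V)
    (hV : ConjInvariant (V : Set (Matrix ι ι D))) (hA : ConjInvariant (A : Set (Matrix ι ι D)))
    (hmul : ∀ v ∈ V, ∀ w ∈ V, v * w ∈ A) : A = ⊤ := by
  have : Nontrivial ι := by
    obtain ⟨i, j, hij, -⟩ := h
    exact ⟨i, j, hij⟩
  have hdiagonal (k : ι) (y : D) : single k k y ∈ A := by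
    obtain ⟨l, hl⟩ := exists_ne k
    simpa using hmul _ (h.single_mem hV hl.symm y) _ (h.single_mem hV hl 1)
  refine eq_top_of_single_mem fun k l y ↦ ?_
  obtain rfl | hkl := eq_or_ne k l
  · exact hdiagonal k y
  · simpa [transvectionDiff, hkl, hkl.symm] using transvectionDiff_mem hA hkl 1 (hdiagonal l y)

theorem mem_center_of_commute_single [Nontrivial ι] {v : Matrix ι ι R}
    (h : ∀ i j x, i ≠ j → Commute v (single i j x)) : v ∈ Set.center (Matrix ι ι R) := by
  suffices (Subring.centralizer {v}).toAddSubgroup = ⊤ from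
    Semigroup.mem_center_iff.mpr fun z ↦
      (Subring.mem_centralizer_iff.mp (this.ge (AddSubgroup.mem_top z)) v rfl).symm
  refine eq_top_of_single_mem fun i j x ↦ Subring.mem_centralizer_iff.mpr ?_
  rintro _ rfl
  obtain rfl | hij := eq_or_ne i j
  · obtain ⟨k, hk⟩ := exists_ne i
    have hmul := (h i k x hk.symm).mul_right (h k i 1 hk)
    rwa [single_mul_single_same, mul_one] at hmul
  · exact h i j x hij

theorem hasOffDiagonalSingle_of_isDiag [Nontrivial ι]
    (hV : ConjInvariant (V : Set (Matrix ι ι D))) {v : Matrix ι ι D} (hv : v ∈ V) (hd : v.IsDiag)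
    (hcenter : v ∉ Set.center (Matrix ι ι D)) : HasOffDiagonalSingle V := by
  contrapose! hcenter
  refine mem_center_of_commute_single fun i j x hij ↦ ?_
  have hdiff : single i j x * v - v * single i j x = single i j (x * v j j - v i i * x) := by
    rw [← hd.diagonal_diag]
    ext a b
    obtain rfl | ha := eq_or_ne i a <;> obtain rfl | hb := eq_or_ne j b <;>
      simp [*, diagonal_apply_ne']
  have hmem := transvectionDiff_mem hV hij x hv
  rw [transvectionDiff, single_mul_mul_single, hd hij.symm, hdiff] at hmem
  have hzero : x * v j j - v i i * x = 0 := by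
    by_contra hne
    exact hcenter ⟨i, j, hij, _, hne, by simpa using hmem⟩
  exact (sub_eq_zero.mp (hdiff.trans (by simp [hzero]))).symm

theorem hasOffDiagonalSingle_of_apply_ne_zero_of_ne
    (hV : ConjInvariant (V : Set (Matrix ι ι D))) {v : Matrix ι ι D} (hv : v ∈ V) {i j k : ι}
    (hij : i ≠ j) (hik : i ≠ k) (hjk : j ≠ k) (h : v i j ≠ 0) : HasOffDiagonalSingle V := by
  refine ⟨j, i, hij.symm, v i j, h, ?_⟩
  convert transvectionDiff_mem hV hik.symm 1
    (transvectionDiff_mem hV hij.symm 1 (transvectionDiff_mem hV hjk 1 hv)) using 1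
  ext a b
  obtain rfl | ha := eq_or_ne j a <;> obtain rfl | hb := eq_or_ne i b <;>
    simp [*, Ne.symm, transvectionDiff_apply]

section TwoIndices

variable {i j : ι}

theorem hasOffDiagonalSingle_of_lower_eq_zero (hV : ConjInvariant (V : Set (Matrix ι ι D)))
    (hij : i ≠ j) (hall : ∀ k, k = i ∨ k = j) {v : Matrix ι ι D} (hv : v ∈ V) (h : v i j ≠ 0)
    (hji : v j i = 0) (hjj : v j j = 0) : HasOffDiagonalSingle V := by
  obtain hii | hii := eq_or_ne (v i i) 0
  · exact ⟨i, j, hij, v i j, h, eq_single_of_forall_eq_or_eq hij hall hii hji hjj ▸ hv⟩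
  · have hmem := transvectionDiff_mem hV hij 1 hv
    rw [eq_single_of_forall_eq_or_eq hij hall (v := transvectionDiff i j 1 v)
      (by simp [transvectionDiff_apply, hij, hji]) (by simp [transvectionDiff_apply, hij, hij.symm])
      (by simp [transvectionDiff_apply, hij.symm, hji])] at hmem
    exact ⟨i, j, hij, _, by simp [transvectionDiff_apply, hji, hjj, hii], hmem⟩

theorem exists_mem_of_diagonal_conj (hV : ConjInvariant (V : Set (Matrix ι ι D))) (hij : i ≠ j)
    {s : D} (hs : s ≠ 0) {v : Matrix ι ι D} (hv : v ∈ V) :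
    ∃ w ∈ V, w i j = (s - 1) * v i j ∧ w j i = v j i * (s⁻¹ - 1) ∧ w j j = 0 := by
  refine ⟨_, sub_mem (diagonal_conj_mem hV (Pi.mulSingle i (Units.mk0 s hs)) hv) hv, ?_, ?_, ?_⟩ <;>
    simp [hij.symm, sub_mul, mul_sub]

theorem exists_ne_zero_and_add_mul_ne_zero {a b s : D} (hb : b ≠ 0) (hs₀ : s ≠ 0) (hs₁ : s ≠ 1) :
    ∃ x : D, x ≠ 0 ∧ a + x * b ≠ 0 := by
  by_cases h : a + b = 0
  · refine ⟨s, hs₀, fun hs ↦ hs₁ (mul_right_cancel₀ hb ?_)⟩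
    rw [one_mul]
    exact add_left_cancel (hs.trans h.symm)
  · exact ⟨1, one_ne_zero, by rwa [one_mul]⟩

theorem hasOffDiagonalSingle_of_forall_eq_or_eq (hV : ConjInvariant (V : Set (Matrix ι ι D)))
    (hij : i ≠ j) (hall : ∀ k, k = i ∨ k = j) {s : D} (hs₀ : s ≠ 0) (hs₁ : s ≠ 1)
    {v : Matrix ι ι D} (hv : v ∈ V) (h : v i j ≠ 0) : HasOffDiagonalSingle V := by
  have hs₁' : s - 1 ≠ 0 := sub_ne_zero.mpr hs₁
  obtain ⟨w, hw, hwij, -, hwjj⟩ := exists_mem_of_diagonal_conj hV hij hs₀ hv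
  obtain hwji | hwji := eq_or_ne (w j i) 0
  · exact hasOffDiagonalSingle_of_lower_eq_zero hV hij hall hw (by simp [*]) hwji hwjj
  obtain ⟨x, hx₀, hx⟩ := exists_ne_zero_and_add_mul_ne_zero (a := w i i) hwji hs₀ hs₁
  have hdij : transvectionDiff i j x w i j = -((w i i + x * w j i) * x) := by
    simp [transvectionDiff_apply, hwjj, add_mul, sub_eq_add_neg, add_comm]
  have hdji : transvectionDiff i j x w j i = 0 := by
    simp [transvectionDiff_apply, hij, hij.symm]
  obtain ⟨t, ht, htij, htji, htjj⟩ :=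
    exists_mem_of_diagonal_conj hV hij hs₀ (transvectionDiff_mem hV hij x hw)
  refine hasOffDiagonalSingle_of_lower_eq_zero hV hij hall ht ?_ ?_ htjj
  · simp [htij, hdij, hs₁', hx, hx₀]
  · simp [htji, hdji]

end TwoIndices

theorem hasOffDiagonalSingle_of_notMem_center [Nontrivial ι]
    (hV : ConjInvariant (V : Set (Matrix ι ι D))) (hcard : ¬ (Nat.card ι = 2 ∧ Nat.card D = 2))
    {v : Matrix ι ι D} (hv : v ∈ V) (hcenter : v ∉ Set.center (Matrix ι ι D)) :
    HasOffDiagonalSingle V := by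
  by_cases hd : v.IsDiag
  · exact hasOffDiagonalSingle_of_isDiag hV hv hd hcenter
  obtain ⟨i, j, hij, h⟩ : ∃ i j, i ≠ j ∧ v i j ≠ 0 := by simpa [IsDiag, Pairwise] using hd
  by_cases hall : ∀ k, k = i ∨ k = j
  · obtain ⟨s, hs₀, hs₁⟩ : ∃ s : D, s ≠ 0 ∧ s ≠ 1 := by
      by_contra! hD
      exact hcard ⟨card_eq_two_of_forall_eq_or_eq hij hall,
        card_eq_two_of_forall_eq_or_eq zero_ne_one fun s ↦ or_iff_not_imp_left.mpr (hD s)⟩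
    exact hasOffDiagonalSingle_of_forall_eq_or_eq hV hij hall hs₀ hs₁ hv h
  · push Not at hall
    obtain ⟨k, hki, hkj⟩ := hall
    exact hasOffDiagonalSingle_of_apply_ne_zero_of_ne hV hv hij hki.symm hkj.symm h

end Matrix

section BinaryMatrix

open Matrix

/-- The ring of `2 × 2` matrices over the field with two elements. -/
abbrev BinaryMatrix := Matrix (Fin 2) (Fin 2) (ZMod 2)

namespace BinaryMatrix

/-- An invertible matrix of order three; it generates a subfield with four elements. -/
def omega : BinaryMatrixˣ :=
  ⟨!![1, 1; 1, 0], !![0, 1; 1, 1], by decide, by decide⟩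

/-- The permutation matrix exchanging the two basis vectors; conjugation by it restricts to the
Frobenius automorphism of the field generated by `omega`. -/
def flip : BinaryMatrixˣ :=
  ⟨!![0, 1; 1, 0], !![0, 1; 1, 0], by decide, by decide⟩

/-- The field with four elements generated by `omega`, as the centralizer of `omega`. -/
def fieldFour : Subring BinaryMatrix :=
  Subring.centralizer {↑omega}

/-- The matrices on which `omega` acts semilinearly from the right; this is a complement of
`fieldFour`. -/
def semilinearPart : AddSubgroup BinaryMatrix :=
  (AddMonoidHom.mulRight (omega : BinaryMatrix)).eqLocus (AddMonoidHom.mulLeft ↑omega⁻¹)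

variable {v w : BinaryMatrix} {V A : AddSubgroup BinaryMatrix}

theorem mem_fieldFour : v ∈ fieldFour ↔ omega * v = v * omega := by
  simp [fieldFour, Subring.mem_centralizer_iff]

theorem mem_semilinearPart : v ∈ semilinearPart ↔ v * omega = ↑omega⁻¹ * v :=
  Iff.rfl

theorem mem_fieldFour_iff_eq :
    v ∈ fieldFour ↔ v = 0 ∨ v = 1 ∨ v = omega ∨ v = ↑omega⁻¹ := by
  rw [mem_fieldFour]
  revert v
  decide

theorem mem_semilinearPart_iff_eq :
    v ∈ semilinearPart ↔
      v = 0 ∨ v = flip ∨ v = omega * flip * ↑omega⁻¹ ∨ v = ↑omega⁻¹ * flip * omega := by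
  rw [mem_semilinearPart]
  revert v
  decide

theorem mul_mem_fieldFour (hv : v ∈ semilinearPart) (hw : w ∈ semilinearPart) :
    v * w ∈ fieldFour := by
  rw [mem_semilinearPart] at hv hw
  have hv' : v * ↑omega⁻¹ = omega * v := by
    rw [Units.mul_inv_eq_iff_eq_mul, mul_assoc, hv, Units.mul_inv_cancel_left]
  rw [mem_fieldFour, mul_assoc v, hw, ← mul_assoc, ← mul_assoc, hv']

theorem conj_add_conj_mem_semilinearPart (v : BinaryMatrix) :
    omega * v * ↑omega⁻¹ + ↑omega⁻¹ * v * omega ∈ semilinearPart := by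
  rw [mem_semilinearPart]
  revert v
  decide

theorem add_conj_add_conj_mem_fieldFour (v : BinaryMatrix) :
    v + (omega * v * ↑omega⁻¹ + ↑omega⁻¹ * v * omega) ∈ fieldFour := by
  rw [mem_fieldFour]
  revert v
  decide

section ConjInvariant

theorem conj_add_conj_mem (hV : ConjInvariant (V : Set BinaryMatrix)) (hv : v ∈ V) :
    omega * v * ↑omega⁻¹ + ↑omega⁻¹ * v * omega ∈ V :=
  V.add_mem (hV omega v hv) (hV omega⁻¹ v hv)

theorem one_mem_of_mem_fieldFour (hV : ConjInvariant (V : Set BinaryMatrix)) (hv : v ∈ V)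
    (hv₀ : v ≠ 0) (h : v ∈ fieldFour) : 1 ∈ V := by
  have htrace : v = 1 ∨ v + flip * v * ↑flip⁻¹ = 1 := by
    obtain rfl | rfl | rfl | rfl := mem_fieldFour_iff_eq.mp h
    · exact absurd rfl hv₀
    all_goals decide
  obtain rfl | htrace := htrace
  · exact hv
  · exact htrace ▸ V.add_mem hv (hV flip v hv)

theorem flip_mem_of_mem_semilinearPart (hV : ConjInvariant (V : Set BinaryMatrix)) (hv : v ∈ V)
    (hv₀ : v ≠ 0) (h : v ∈ semilinearPart) : ↑flip ∈ V := by
  obtain rfl | rfl | rfl | rfl := mem_semilinearPart_iff_eq.mp h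
  · exact absurd rfl hv₀
  · exact hv
  · simpa [mul_assoc] using hV omega⁻¹ _ hv
  · simpa [mul_assoc] using hV omega _ hv

theorem omega_inv_mem_of_mem_fieldFour (hV : ConjInvariant (V : Set BinaryMatrix)) (hv : v ∈ V)
    (h : v ∈ fieldFour) (hcenter : v ∉ Set.center BinaryMatrix) : ↑omega⁻¹ ∈ V := by
  obtain rfl | rfl | rfl | rfl := mem_fieldFour_iff_eq.mp h
  · exact absurd Set.zero_mem_center hcenter
  · exact absurd Set.one_mem_center hcenter
  · have hconj : (flip * omega * ↑flip⁻¹ : BinaryMatrix) = ↑omega⁻¹ := by decide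
    exact hconj ▸ hV flip _ hv
  · exact hv

theorem fieldFour_le (hA : ConjInvariant (A : Set BinaryMatrix)) (h : ↑omega ∈ A) :
    fieldFour.toAddSubgroup ≤ A := by
  have hfield : ↑omega ∈ fieldFour := mem_fieldFour.mpr rfl
  have hinv : ↑omega⁻¹ ∈ A := omega_inv_mem_of_mem_fieldFour hA h hfield fun hc ↦
    absurd (Semigroup.mem_center_iff.mp hc flip) (by decide)
  intro v hv
  obtain rfl | rfl | rfl | rfl := mem_fieldFour_iff_eq.mp hv
  · exact zero_mem A
  · exact one_mem_of_mem_fieldFour hA h omega.ne_zero hfield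
  · exact h
  · exact hinv

theorem hasOffDiagonalSingle_of_not_le (hV : ConjInvariant (V : Set BinaryMatrix))
    (hfield : ¬ V ≤ fieldFour.toAddSubgroup) (hsemi : ¬ V ≤ semilinearPart) :
    HasOffDiagonalSingle V := by
  obtain ⟨v, hv, hvf⟩ := SetLike.not_le_iff_exists.mp hfield
  obtain ⟨w, hw, hws⟩ := SetLike.not_le_iff_exists.mp hsemi
  have hflip : ↑flip ∈ V := by
    refine flip_mem_of_mem_semilinearPart hV (conj_add_conj_mem hV hv) (fun h ↦ hvf ?_)
      (conj_add_conj_mem_semilinearPart v)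
    have hvf := add_conj_add_conj_mem_fieldFour v
    rwa [h, add_zero] at hvf
  have hone : 1 ∈ V := by
    refine one_mem_of_mem_fieldFour hV (V.add_mem hw (conj_add_conj_mem hV hw)) (fun h ↦ hws ?_)
      (add_conj_add_conj_mem_fieldFour w)
    exact eq_neg_of_add_eq_zero_left h ▸ neg_mem (conj_add_conj_mem_semilinearPart w)
  have hsingle : single 0 1 1 = 1 + (↑omega⁻¹ * flip * omega : BinaryMatrix) := by decide
  exact ⟨0, 1, by decide, 1, one_ne_zero, hsingle ▸ V.add_mem hone (hV omega⁻¹ _ hflip)⟩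

theorem closure_mul_eq_top_or_eq_fieldFour {S : Set BinaryMatrix} (hS : ConjInvariant S)
    (hcenter : ¬ S ⊆ Set.center BinaryMatrix) :
    AddSubgroup.closure (S * S) = ⊤ ∨
      AddSubgroup.closure (S * S) = fieldFour.toAddSubgroup := by
  have hV := hS.closure
  have hA := (hS.mul hS).closure
  have hmul {v w : BinaryMatrix} (hv : v ∈ AddSubgroup.closure S)
      (hw : w ∈ AddSubgroup.closure S) : v * w ∈ AddSubgroup.closure (S * S) :=
    mul_mem_closure_mul hv hw
  obtain ⟨s, hs, hsc⟩ := Set.not_subset.mp hcenter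
  have hsV := AddSubgroup.subset_closure hs
  by_cases hfield : AddSubgroup.closure S ≤ fieldFour.toAddSubgroup
  · have hinv := omega_inv_mem_of_mem_fieldFour hV hsV (hfield hsV) hsc
    have homega : (↑omega⁻¹ * ↑omega⁻¹ : BinaryMatrix) = omega := by decide
    refine .inr (le_antisymm ((AddSubgroup.closure_le _).mpr ?_)
      (fieldFour_le hA (homega ▸ hmul hinv hinv)))
    rintro _ ⟨v, hv, w, hw, rfl⟩
    exact fieldFour.mul_mem (hfield (AddSubgroup.subset_closure hv))
      (hfield (AddSubgroup.subset_closure hw))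
  by_cases hsemi : AddSubgroup.closure S ≤ semilinearPart
  · have hs₀ : s ≠ 0 := fun h ↦ hsc (h ▸ Set.zero_mem_center)
    have hflip := flip_mem_of_mem_semilinearPart hV hsV hs₀ (hsemi hsV)
    have homega : (↑omega⁻¹ * flip * omega * flip : BinaryMatrix) = omega := by decide
    refine .inr (le_antisymm ((AddSubgroup.closure_le _).mpr ?_)
      (fieldFour_le hA (homega ▸ hmul (hV omega⁻¹ _ hflip) hflip)))
    rintro _ ⟨v, hv, w, hw, rfl⟩
    exact mul_mem_fieldFour (hsemi (AddSubgroup.subset_closure hv))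
      (hsemi (AddSubgroup.subset_closure hw))
  · exact .inl ((hasOffDiagonalSingle_of_not_le hV hfield hsemi).eq_top_of_mul_mem hV hA
      fun _ hv _ hw ↦ hmul hv hw)

end ConjInvariant

end BinaryMatrix

theorem image_mapMatrix_fieldFour {D : Type*} [DivisionRing D] (e : ZMod 2 ≃+* D) :
    e.mapMatrix '' (BinaryMatrix.fieldFour : Set BinaryMatrix) =
      {0, 1, of fun (i j : Fin 2) ↦ if (i : ℕ) = 1 ∧ (j : ℕ) = 1 then 0 else 1,
        of fun (i j : Fin 2) ↦ if (i : ℕ) = 0 ∧ (j : ℕ) = 0 then 0 else 1} := by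
  have homega : e.mapMatrix ↑BinaryMatrix.omega =
      of fun (i j : Fin 2) ↦ if (i : ℕ) = 1 ∧ (j : ℕ) = 1 then (0 : D) else 1 := by
    ext i j
    fin_cases i <;> fin_cases j <;> simp [BinaryMatrix.omega]
  have hinv : e.mapMatrix ↑BinaryMatrix.omega⁻¹ =
      of fun (i j : Fin 2) ↦ if (i : ℕ) = 0 ∧ (j : ℕ) = 0 then (0 : D) else 1 := by
    ext i j
    fin_cases i <;> fin_cases j <;> simp [BinaryMatrix.omega]
  have hfield : (BinaryMatrix.fieldFour : Set BinaryMatrix) =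
      {0, 1, ↑BinaryMatrix.omega, ↑BinaryMatrix.omega⁻¹} :=
    Set.ext fun v ↦ BinaryMatrix.mem_fieldFour_iff_eq
  simp only [hfield, Set.image_insert_eq, Set.image_singleton, map_zero, map_one, homega, hinv]

theorem closure_mul_eq_top_or_eq_of_card_eq_two {D : Type*} [DivisionRing D]
    (hD : Nat.card D = 2) {S : Set (Matrix (Fin 2) (Fin 2) D)} (hS : ConjInvariant S)
    (hcenter : ¬ S ⊆ Set.center (Matrix (Fin 2) (Fin 2) D)) :
    AddSubgroup.closure (S * S) = ⊤ ∨
      (AddSubgroup.closure (S * S) : Set (Matrix (Fin 2) (Fin 2) D)) =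
        {0, 1, of fun (i j : Fin 2) ↦ if (i : ℕ) = 1 ∧ (j : ℕ) = 1 then 0 else 1,
          of fun (i j : Fin 2) ↦ if (i : ℕ) = 0 ∧ (j : ℕ) = 0 then 0 else 1} := by
  have : Finite D := Nat.finite_of_card_ne_zero (by simp [hD])
  have : Fintype D := Fintype.ofFinite D
  let e : ZMod 2 ≃+* D :=
    ZMod.ringEquivOfPrime D Nat.prime_two (Nat.card_eq_fintype_card.symm.trans hD)
  let E : BinaryMatrix ≃+* Matrix (Fin 2) (Fin 2) D := e.mapMatrix
  have himage : E '' (E.symm '' S) = S := E.toEquiv.image_symm_image S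
  have hcenter' : ¬ E.symm '' S ⊆ Set.center BinaryMatrix := fun h ↦ hcenter fun s hs ↦
    (MulEquivClass.apply_mem_center_iff E.symm).mp (h ⟨s, hs, rfl⟩)
  rw [← himage, ← map_closure_mul]
  obtain h | h := BinaryMatrix.closure_mul_eq_top_or_eq_fieldFour (hS.image E.symm) hcenter'
  · exact .inl (h ▸ AddSubgroup.map_top_of_surjective _ E.surjective)
  · exact .inr (h ▸ image_mapMatrix_fieldFour e)

end BinaryMatrix

section Matrix

theorem closure_evalImage_mul_evalImage_eq_top_of_unique {F D X ι : Type*} [Field F]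
    [DivisionRing D] [Algebra F D] [Algebra.IsCentral F D] [Unique ι]
    [instFintype : Fintype ι] [instDecidableEq : DecidableEq ι] {f : FreeAlgebra F X}
    (hf : ¬ evalImage f (Matrix ι ι D) ⊆ Set.center (Matrix ι ι D)) :
    AddSubgroup.closure (evalImage f (Matrix ι ι D) * evalImage f (Matrix ι ι D)) = ⊤ := by
  obtain rfl := Subsingleton.elim Unique.fintype instFintype
  obtain rfl := Subsingleton.elim (fun a b ↦ decidableEq_of_subsingleton a b) instDecidableEq
  let e : D ≃ₐ[F] Matrix ι ι D := Matrix.uniqueAlgEquiv.symm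
  rw [← image_evalImage e] at hf ⊢
  have hD : ¬ evalImage f D ⊆ Set.center D := by
    refine mt (fun h ↦ ?_) hf
    rintro _ ⟨v, hv, rfl⟩
    exact (MulEquivClass.apply_mem_center_iff e).mpr (h hv)
  have htop := map_closure_mul (e : D ≃+* Matrix ι ι D) (evalImage f D)
  rw [closure_evalImage_mul_evalImage_eq_top hD] at htop
  exact htop.symm.trans (AddSubgroup.map_top_of_surjective _ e.surjective)

theorem closure_mul_eq_top_of_notSubset_center {ι D : Type*} [Fintype ι] [DecidableEq ι]
    [Nontrivial ι] [DivisionRing D] (hcard : ¬ (Nat.card ι = 2 ∧ Nat.card D = 2))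
    {S : Set (Matrix ι ι D)} (hS : ConjInvariant S)
    (hcenter : ¬ S ⊆ Set.center (Matrix ι ι D)) : AddSubgroup.closure (S * S) = ⊤ := by
  obtain ⟨s, hs, hsc⟩ := Set.not_subset.mp hcenter
  exact (hasOffDiagonalSingle_of_notMem_center hS.closure hcard (AddSubgroup.subset_closure hs)
    hsc).eq_top_of_mul_mem hS.closure (hS.mul hS).closure fun _ hv _ hw ↦ mul_mem_closure_mul hv hw

end Matrix

/-- Let `D` be a division ring with center `F` and `n` a positive integer.
If `f ∈ F⟨X⟩` is not central-valued on `M_n(D)`, then either `M_n(D)` equals the additive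
subgroup generated by the products of two values of `f`, or `n = 2`, `D` has exactly two
elements, and this additive subgroup is the four-element exceptional set. -/
theorem stmt_0 (D : Type*) [DivisionRing D] (n : ℕ) (hn : 0 < n)
    (f : FreeAlgebra (Subring.center D) ℕ)
    (hf : ¬ Set.range (fun a : ℕ → Matrix (Fin n) (Fin n) D =>
        FreeAlgebra.lift (Subring.center D) a f) ⊆
        Set.center (Matrix (Fin n) (Fin n) D)) :
    AddSubgroup.closure
        {x : Matrix (Fin n) (Fin n) D | ∃ a b : ℕ → Matrix (Fin n) (Fin n) D,
          x = FreeAlgebra.lift (Subring.center D) a f *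
              FreeAlgebra.lift (Subring.center D) b f} = ⊤ ∨
      (n = 2 ∧ Nat.card D = 2 ∧
        (AddSubgroup.closure
          {x : Matrix (Fin n) (Fin n) D | ∃ a b : ℕ → Matrix (Fin n) (Fin n) D,
            x = FreeAlgebra.lift (Subring.center D) a f *
                FreeAlgebra.lift (Subring.center D) b f} :
            Set (Matrix (Fin n) (Fin n) D)) =
          {0, 1, Matrix.of fun (i j : Fin n) => if (i : ℕ) = 1 ∧ (j : ℕ) = 1 then 0 else 1,
            Matrix.of fun (i j : Fin n) => if (i : ℕ) = 0 ∧ (j : ℕ) = 0 then 0 else 1}) := by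
  have hmul : {x : Matrix (Fin n) (Fin n) D | ∃ a b : ℕ → Matrix (Fin n) (Fin n) D,
      x = FreeAlgebra.lift (Subring.center D) a f * FreeAlgebra.lift (Subring.center D) b f} =
      evalImage f (Matrix (Fin n) (Fin n) D) * evalImage f (Matrix (Fin n) (Fin n) D) := by
    ext x
    simp [evalImage, Set.mem_mul, eq_comm]
  rw [hmul]
  have hconj := conjInvariant_evalImage (R := Matrix (Fin n) (Fin n) D) f
  obtain rfl | hn := (Nat.one_le_iff_ne_zero.mpr hn.ne').eq_or_lt
  · have : Algebra.IsCentral (Subring.center D) D :=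
      ⟨fun x hx ↦ Algebra.mem_bot.mpr ⟨⟨x, hx⟩, rfl⟩⟩
    exact .inl (closure_evalImage_mul_evalImage_eq_top_of_unique hf)
  by_cases hcard : n = 2 ∧ Nat.card D = 2
  · obtain ⟨rfl, hD⟩ := hcard
    exact (closure_mul_eq_top_or_eq_of_card_eq_two hD hconj hf).imp_right fun h ↦ ⟨rfl, hD, h⟩
  · have : Nontrivial (Fin n) := Fin.nontrivial_iff_two_le.mpr hn
    exact .inl (closure_mul_eq_top_of_notSubset_center (by simpa using hcard) hconj hf)
end

section
/- Let K be a commutative unital ring, let R be a unital associative K-algebra, let t ≥ 1, and let f be the multilinear polynomial of degree t given by coefficients (λ_σ)_{σ ∈ Sym(t)} in K, with value f(a₁,…,a_t) = Σ_{σ ∈ Sym(t)} λ_σ a_{σ(1)}⋯a_{σ(t)}. Suppose that R is generated by its commutators as an ideal and that, for some integer n > 1, R equals the additive subgroup generated by the set f(R)^[n] of all products v₁v₂⋯v_n with each v_i a value of f on R. Then there exists a positive integer N such that every x ∈ R can be written as x = a₁ + ⋯ + a_N with each a_i ∈ f(R)^[n]. -/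
/-!
Call a family of elements of `R` *of bounded width* with respect to `A ⊆ R` if all its members are
sums of some fixed number of elements of `A`. Write `F` for the set of values of `f`. The Leibniz
rule for `⁅z, ·⁆` shows that `⁅z, v⁆` is a sum of `t` values of `f` for each `v ∈ F`; hence
`z ↦ ⁅z, w⁆` has bounded width with respect to `F ^ n` for every `w` in the additive span of
`F ^ n`, that is, for every `w ∈ R`. This makes
`I = {w | z ↦ z * w has bounded width with respect to F ^ n}` a two-sided ideal: for the right
absorption, `z * (x * y) = (y * z) * x + ⁅z * x, y⁆`.

The identity `z * ⁅p, v⁆ = ⁅z * p, v⁆ - ⁅z, v⁆ * p` puts `⁅p, v⁆` into `I` for `p ∈ F ^ (n - 1)` and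
`v ∈ F`. So `F ^ (n - 1)` is central in `R ⧸ I`. As `(F ^ n) ^ (n - 1) = (F ^ (n - 1)) ^ n` spans
`R`, the quotient is commutative, so `I` contains all commutators and therefore `1`.
-/

open scoped Pointwise

section BoundedWidth

variable {α β M N : Type*}

/-- A function `g` has bounded width with respect to `A` if there is a uniform `k` such that every
value of `g` is a sum of exactly `k` elements of `A`. Here `k • A` is the pointwise sum
`A + ⋯ + A`, not the dilation of `A` by `k`. -/
def HasBoundedWidth [AddMonoid M] (A : Set M) (g : α → M) : Prop :=
  ∃ k : ℕ, ∀ x, g x ∈ k • A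

namespace HasBoundedWidth

theorem zero [AddMonoid M] (A : Set M) : HasBoundedWidth A fun _ : α ↦ (0 : M) :=
  ⟨0, fun _ ↦ by rw [zero_nsmul, Set.mem_zero]⟩

theorem comp [AddMonoid M] {A : Set M} {g : α → M} (hg : HasBoundedWidth A g) (φ : β → α) :
    HasBoundedWidth A fun x ↦ g (φ x) :=
  hg.imp fun _ hk x ↦ hk (φ x)

theorem add [AddMonoid M] {A : Set M} {g h : α → M} (hg : HasBoundedWidth A g)
    (hh : HasBoundedWidth A h) : HasBoundedWidth A fun x ↦ g x + h x := by
  obtain ⟨k, hk⟩ := hg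
  obtain ⟨l, hl⟩ := hh
  exact ⟨k + l, fun x ↦ add_nsmul A k l ▸ Set.add_mem_add (hk x) (hl x)⟩

theorem map [AddMonoid M] [AddMonoid N] {A : Set M} {B : Set N} {g : α → M}
    (hg : HasBoundedWidth A g) (φ : M →+ N) (hφ : Set.MapsTo φ A B) :
    HasBoundedWidth B fun x ↦ φ (g x) := by
  obtain ⟨k, hk⟩ := hg
  have hsub : φ '' (k • A) ⊆ k • B := by
    rw [Set.image_nsmul]
    exact Set.nsmul_subset_nsmul_left hφ.image_subset
  exact ⟨k, fun x ↦ hsub (Set.mem_image_of_mem φ (hk x))⟩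

theorem mul_right {R : Type*} [NonUnitalNonAssocSemiring R] {A B : Set R} {g : α → R}
    (hg : HasBoundedWidth A g) {b : R} (hb : b ∈ B) : HasBoundedWidth (A * B) fun x ↦ g x * b :=
  hg.map (AddMonoidHom.mulRight b) fun _ ha ↦ Set.mul_mem_mul ha hb

theorem mul_left {R : Type*} [NonUnitalNonAssocSemiring R] {A B : Set R} {g : α → R}
    (hg : HasBoundedWidth B g) {a : R} (ha : a ∈ A) : HasBoundedWidth (A * B) fun x ↦ a * g x :=
  hg.map (AddMonoidHom.mulLeft a) fun _ hb ↦ Set.mul_mem_mul ha hb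

theorem exists_pos_forall_mem_nsmul [AddGroup M] {A : Set M} (h : HasBoundedWidth A fun x : M ↦ x)
    (hA : A.Nonempty) : ∃ k : ℕ, 0 < k ∧ ∀ x, x ∈ k • A := by
  obtain ⟨k, hk⟩ := h
  obtain ⟨a, ha⟩ := hA
  refine ⟨k + 1, k.succ_pos, fun x ↦ ?_⟩
  rw [succ_nsmul, ← sub_add_cancel x a]
  exact Set.add_mem_add (hk _) ha

end HasBoundedWidth

end BoundedWidth

section BoundedCommutators

attribute [local instance] LieRing.ofAssociativeRing

variable {R : Type*} [Ring R] {A B : Set R}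

theorem lie_mul_leibniz (z a b : R) : ⁅z, a * b⁆ = ⁅z, a⁆ * b + a * ⁅z, b⁆ := by
  simp only [Ring.lie_def]
  noncomm_ring

theorem hasBoundedWidth_lie_of_mem_pow (hA : ∀ a ∈ A, HasBoundedWidth A fun z : R ↦ ⁅z, a⁆)
    (n : ℕ) {p : R} (hp : p ∈ A ^ n) : HasBoundedWidth (A ^ n) fun z : R ↦ ⁅z, p⁆ := by
  induction n generalizing p with
  | zero =>
    obtain rfl : p = 1 := by simpa only [pow_zero, Set.mem_one] using hp
    simpa only [Ring.lie_def, mul_one, one_mul, sub_self] using HasBoundedWidth.zero _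
  | succ n ih =>
    rw [pow_succ] at hp ⊢
    obtain ⟨q, hq, a, ha, rfl⟩ := hp
    simpa only [lie_mul_leibniz] using ((ih hq).mul_right ha).add ((hA a ha).mul_left hq)

theorem hasBoundedWidth_lie_of_mem_closure (hA : ∀ a ∈ A, HasBoundedWidth A fun z : R ↦ ⁅z, a⁆)
    {w : R} (hw : w ∈ AddSubgroup.closure A) : HasBoundedWidth A fun z : R ↦ ⁅z, w⁆ := by
  induction hw using AddSubgroup.closure_induction with
  | mem a ha => exact hA a ha
  | zero => simpa only [lie_zero] using HasBoundedWidth.zero A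
  | add x y _ _ hx hy => simpa only [lie_add] using hx.add hy
  | neg x _ hx => simpa only [lie_neg, neg_lie] using hx.comp Neg.neg

theorem hasBoundedWidth_mul_lie {p v : R} (hAB : HasBoundedWidth (A * B) fun z : R ↦ ⁅z, v⁆)
    (hA : HasBoundedWidth A fun z : R ↦ ⁅z, v⁆) (hp : p ∈ B) :
    HasBoundedWidth (A * B) (· * ⁅p, v⁆) := by
  have mul_lie_eq (z : R) : z * ⁅p, v⁆ = ⁅z * p, v⁆ + ⁅-z, v⁆ * p := by
    simp only [Ring.lie_def]
    noncomm_ring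
  simpa only [mul_lie_eq] using (hAB.comp (· * p)).add ((hA.comp Neg.neg).mul_right hp)

/-- The two-sided ideal of those `w` for which the left multiples of `w` are sums of boundedly many
elements of `A`. Absorption on the right relies on the bounded width of commutators. -/
def boundedWidthIdeal (A : Set R) (hA : ∀ w, HasBoundedWidth A fun z : R ↦ ⁅z, w⁆) :
    TwoSidedIdeal R :=
  .mk' {w | HasBoundedWidth A (· * w)}
    (by simpa only [Set.mem_ofPred_eq, mul_zero] using HasBoundedWidth.zero A)
    (fun {x y} hx hy ↦ by
      simpa only [Set.mem_ofPred_eq, mul_add] using HasBoundedWidth.add hx hy)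
    (fun {x} hx ↦ by
      simpa only [Set.mem_ofPred_eq, neg_mul, mul_neg] using HasBoundedWidth.comp hx Neg.neg)
    (fun {x y} hy ↦ by
      simpa only [Set.mem_ofPred_eq, mul_assoc] using HasBoundedWidth.comp hy (· * x))
    (fun {x y} hx ↦ by
      have mul_mul_eq (z : R) : z * (x * y) = y * z * x + ⁅z * x, y⁆ := by
        simp only [Ring.lie_def]
        noncomm_ring
      simpa only [Set.mem_ofPred_eq, mul_mul_eq] using
        HasBoundedWidth.add (HasBoundedWidth.comp hx (y * ·)) ((hA y).comp (· * x)))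

theorem mem_boundedWidthIdeal {hA : ∀ w, HasBoundedWidth A fun z : R ↦ ⁅z, w⁆} {w : R} :
    w ∈ boundedWidthIdeal A hA ↔ HasBoundedWidth A (· * w) :=
  TwoSidedIdeal.mem_mk' ..

end BoundedCommutators

section Commutativity

variable {R : Type*} [Ring R] {A : Set R}

theorem addSubgroupClosure_pow_eq_top (hA : AddSubgroup.closure A = ⊤) {n : ℕ} (hn : n ≠ 0) :
    AddSubgroup.closure (A ^ n) = ⊤ := by
  have span_eq_top : Submodule.span ℤ A = ⊤ := by
    rw [← Submodule.toAddSubgroup_inj, Submodule.span_int_eq_addSubgroupClosure, hA]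
    rfl
  have top_pow : (⊤ : Submodule ℤ R) ^ n = ⊤ := top_le_iff.1 (le_self_pow le_top hn)
  rw [← Submodule.span_int_eq_addSubgroupClosure, ← Submodule.span_pow, span_eq_top, top_pow]
  rfl

theorem mem_center_of_forall_commute {n : ℕ} (hA : AddSubgroup.closure (A ^ n) = ⊤) {p : R}
    (hp : ∀ a ∈ A, Commute p a) : p ∈ Subring.center R := by
  have hpow : A ^ n ⊆ Subring.centralizer {p} :=
    Submonoid.pow_subset (S := (Subring.centralizer {p}).toSubmonoid) fun a ha ↦
      Subring.mem_centralizer_iff.2 fun _ hq ↦ hq ▸ hp a ha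
  have htop : ⊤ ≤ (Subring.centralizer {p}).toAddSubgroup :=
    hA ▸ (AddSubgroup.closure_le _).2 hpow
  exact Subring.mem_center_iff.2 fun x ↦
    (Subring.mem_centralizer_iff.1 (htop (AddSubgroup.mem_top x)) p rfl).symm

theorem commute_of_closure_pow_succ_eq_top {n : ℕ} (hn : n ≠ 0)
    (hgen : AddSubgroup.closure (A ^ (n + 1)) = ⊤)
    (hcomm : ∀ p ∈ A ^ n, ∀ a ∈ A, Commute p a) (x y : R) : Commute x y := by
  have hcenter : A ^ n ⊆ Subring.center R :=
    fun p hp ↦ mem_center_of_forall_commute hgen (hcomm p hp)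
  have hpow : (A ^ (n + 1)) ^ n ⊆ Subring.center R := by
    rw [pow_right_comm]
    exact Submonoid.pow_subset (S := (Subring.center R).toSubmonoid) hcenter
  have htop : ⊤ ≤ (Subring.center R).toAddSubgroup :=
    addSubgroupClosure_pow_eq_top hgen hn ▸ (AddSubgroup.closure_le _).2 hpow
  exact (Subring.mem_center_iff.1 (htop (AddSubgroup.mem_top x)) y).symm

theorem commute_mk'_iff_lie_mem (I : TwoSidedIdeal R) (x y : R) :
    Commute (I.ringCon.mk' x) (I.ringCon.mk' y) ↔ ⁅x, y⁆ ∈ I := by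
  rw [Ring.lie_def, ← I.rel_iff, ← RingCon.eq]
  rfl

theorem lie_mem_of_closure_pow_succ_eq_top (I : TwoSidedIdeal R) {n : ℕ} (hn : n ≠ 0)
    (hgen : AddSubgroup.closure (A ^ (n + 1)) = ⊤) (hI : ∀ p ∈ A ^ n, ∀ a ∈ A, ⁅p, a⁆ ∈ I)
    (x y : R) : ⁅x, y⁆ ∈ I := by
  have hgen' : AddSubgroup.closure ((I.ringCon.mk' '' A) ^ (n + 1)) = ⊤ := by
    calc
      _ = (AddSubgroup.closure (A ^ (n + 1))).map I.ringCon.mk'.toAddMonoidHom := by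
        rw [AddMonoidHom.map_closure, ← Set.image_pow]; rfl
      _ = ⊤ := by
        rw [hgen]; exact AddSubgroup.map_top_of_surjective _ I.ringCon.mk'_surjective
  refine (commute_mk'_iff_lie_mem I x y).1 (commute_of_closure_pow_succ_eq_top hn hgen' ?_ _ _)
  rw [← Set.image_pow]
  rintro _ ⟨p, hp, rfl⟩ _ ⟨a, ha, rfl⟩
  exact (commute_mk'_iff_lie_mem I p a).2 (hI p hp a ha)

end Commutativity

section Spanning

variable {R : Type*} [Ring R] {A : Set R}

theorem hasBoundedWidth_id_of_span_lie_eq_top {n : ℕ} (hn : 1 < n)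
    (hA : ∀ a ∈ A, HasBoundedWidth A fun z : R ↦ ⁅z, a⁆)
    (hcomm : TwoSidedIdeal.span {x : R | ∃ a b : R, x = ⁅a, b⁆} = ⊤)
    (hgen : AddSubgroup.closure (A ^ n) = ⊤) : HasBoundedWidth (A ^ n) fun x : R ↦ x := by
  obtain ⟨m, rfl⟩ : ∃ m, n = m + 1 := Nat.exists_eq_succ_of_ne_zero hn.ne_bot
  have hlie (w : R) : HasBoundedWidth (A ^ (m + 1)) fun z : R ↦ ⁅z, w⁆ :=
    hasBoundedWidth_lie_of_mem_closure (fun _ ↦ hasBoundedWidth_lie_of_mem_pow hA _)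
      (hgen ▸ AddSubgroup.mem_top w)
  let I := boundedWidthIdeal (A ^ (m + 1)) hlie
  have lie_mem (x y : R) : ⁅x, y⁆ ∈ I := by
    refine lie_mem_of_closure_pow_succ_eq_top I (by lia) hgen (fun p hp v hv ↦ ?_) x y
    rw [mem_boundedWidthIdeal, pow_succ']
    exact hasBoundedWidth_mul_lie (pow_succ' A m ▸ hlie v) (hA v hv) hp
  have one_mem : 1 ∈ I := by
    have span_le : TwoSidedIdeal.span {x : R | ∃ a b : R, x = ⁅a, b⁆} ≤ I :=
      TwoSidedIdeal.span_le.2 fun _ ⟨a, b, hab⟩ ↦ hab ▸ lie_mem a b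
    exact span_le (hcomm ▸ TwoSidedIdeal.mem_top _)
  simpa only [mul_one] using mem_boundedWidthIdeal.1 one_mem

end Spanning

section Values

theorem setOf_exists_prod_ofFn_eq_pow {M : Type*} [Monoid M] (S : Set M) (n : ℕ) :
    {x : M | ∃ v : Fin n → M, (∀ i, v i ∈ S) ∧ x = (List.ofFn v).prod} = S ^ n := by
  ext x
  rw [Set.mem_pow]
  exact ⟨fun ⟨v, hv, hx⟩ ↦ ⟨fun i ↦ ⟨v i, hv i⟩, hx.symm⟩,
    fun ⟨v, hx⟩ ↦ ⟨fun i ↦ v i, fun i ↦ (v i).2, hx.symm⟩⟩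

theorem exists_eq_sum_of_mem_nsmul {M : Type*} [AddCommMonoid M] {A : Set M} {n : ℕ} {x : M}
    (hx : x ∈ n • A) : ∃ a : Fin n → M, (∀ i, a i ∈ A) ∧ x = ∑ i, a i := by
  obtain ⟨a, ha⟩ := Set.mem_nsmul.1 hx
  exact ⟨fun i ↦ a i, fun i ↦ (a i).2, by rw [← ha, List.sum_ofFn]⟩

end Values

section MultilinearPolynomial

attribute [local instance] LieRing.ofAssociativeRing

theorem lie_prod_ofFn_s2 {R : Type*} [Ring R] (z : R) {m : ℕ} (b : Fin m → R) :
    ⁅z, (List.ofFn b).prod⁆ = ∑ j, (List.ofFn (Function.update b j ⁅z, b j⁆)).prod := by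
  induction b using Fin.consInduction with
  | elim0 => simp [Ring.lie_def]
  | cons a b ih =>
    simp only [List.ofFn_cons, List.prod_cons, lie_mul_leibniz, ih, Fin.sum_univ_succ,
      Fin.cons_zero, Fin.cons_succ, Fin.update_cons_zero, ← Fin.cons_update, Finset.mul_sum]

/-- The value at `a` of the multilinear polynomial of degree `t` with coefficients `lam`. -/
def multilinearEval {K R : Type*} [CommSemiring K] [Semiring R] [Algebra K R] {t : ℕ}
    (lam : Equiv.Perm (Fin t) → K) (a : Fin t → R) : R :=
  ∑ σ : Equiv.Perm (Fin t), lam σ • (List.ofFn fun i ↦ a (σ i)).prod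

/-- The set of values on `R` of the multilinear polynomial of degree `t` with coefficients `lam`. -/
def multilinearImage {K : Type*} (R : Type*) [CommSemiring K] [Semiring R] [Algebra K R] {t : ℕ}
    (lam : Equiv.Perm (Fin t) → K) : Set R :=
  {y | ∃ a : Fin t → R, y = multilinearEval lam a}

theorem multilinearImage_nonempty {K R : Type*} [CommSemiring K] [Semiring R] [Algebra K R] {t : ℕ}
    (lam : Equiv.Perm (Fin t) → K) : (multilinearImage R lam).Nonempty :=
  ⟨_, 0, rfl⟩

variable {K R : Type*} [CommSemiring K] [Ring R] [Algebra K R] {t : ℕ}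

theorem lie_multilinearEval (lam : Equiv.Perm (Fin t) → K) (z : R) (a : Fin t → R) :
    ⁅z, multilinearEval lam a⁆ = ∑ i, multilinearEval lam (Function.update a i ⁅z, a i⁆) := by
  have lie_term (σ : Equiv.Perm (Fin t)) :
      ⁅z, lam σ • (List.ofFn fun i ↦ a (σ i)).prod⁆ =
        ∑ i, lam σ • (List.ofFn (Function.update a i ⁅z, a i⁆ ∘ σ)).prod := by
    calc
      _ = lam σ • ⁅z, (List.ofFn (a ∘ σ)).prod⁆ := by
        simp only [Ring.lie_def, mul_smul_comm, smul_mul_assoc, smul_sub]; rfl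
      _ = ∑ j, lam σ • (List.ofFn (Function.update a (σ j) ⁅z, a (σ j)⁆ ∘ σ)).prod := by
        simp only [lie_prod_ofFn_s2, Finset.smul_sum, Function.comp_apply,
          Function.update_comp_eq_of_injective a σ.injective]
      _ = _ := Equiv.sum_comp σ fun i ↦
        lam σ • (List.ofFn (Function.update a i ⁅z, a i⁆ ∘ σ)).prod
  simp only [multilinearEval, lie_sum, lie_term]
  exact Finset.sum_comm

theorem hasBoundedWidth_lie_of_mem_multilinearImage {lam : Equiv.Perm (Fin t) → K} {v : R}
    (hv : v ∈ multilinearImage R lam) :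
    HasBoundedWidth (multilinearImage R lam) fun z : R ↦ ⁅z, v⁆ := by
  obtain ⟨a, rfl⟩ := hv
  refine ⟨t, fun z ↦ Set.mem_nsmul.2 ⟨fun i ↦ ⟨_, Function.update a i ⁅z, a i⁆, rfl⟩, ?_⟩⟩
  simp only [List.sum_ofFn, lie_multilinearEval]

end MultilinearPolynomial

/-- Let `R` be a unital `K`-algebra, `f` a multilinear polynomial of
degree `t ≥ 1` with coefficients `lam : Sym(t) → K`. If `R` is generated by its
commutators as an ideal and `R` equals the additive subgroup generated by the set of
products of `n` values of `f` (for some `n > 1`), then there is `N ≥ 1` such that every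
`x ∈ R` is a sum of `N` elements of that set of products. -/
theorem stmt_2 (K : Type*) [CommRing K] (R : Type*) [Ring R] [Algebra K R]
    (t : ℕ) (ht : 1 ≤ t) (lam : Equiv.Perm (Fin t) → K) (n : ℕ) (hn : 1 < n)
    (hcomm : TwoSidedIdeal.span {x : R | ∃ a b : R, x = a * b - b * a} = ⊤)
    (hgen : AddSubgroup.closure
        {x : R | ∃ v : Fin n → R,
          (∀ i, v i ∈ {y : R | ∃ a : Fin t → R,
            y = ∑ σ : Equiv.Perm (Fin t),
              lam σ • (List.ofFn fun i => a (σ i)).prod}) ∧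
          x = (List.ofFn v).prod} = ⊤) :
    ∃ N : ℕ, 0 < N ∧ ∀ x : R, ∃ a : Fin N → R,
      (∀ i, a i ∈ {x : R | ∃ v : Fin n → R,
          (∀ i, v i ∈ {y : R | ∃ a : Fin t → R,
            y = ∑ σ : Equiv.Perm (Fin t),
              lam σ • (List.ofFn fun i => a (σ i)).prod}) ∧
          x = (List.ofFn v).prod}) ∧
      x = ∑ i, a i := by
  rw [setOf_exists_prod_ofFn_eq_pow] at hgen ⊢
  have hwidth : HasBoundedWidth (multilinearImage R lam ^ n) fun x : R ↦ x :=
    hasBoundedWidth_id_of_span_lie_eq_top hn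
      (fun _ ↦ hasBoundedWidth_lie_of_mem_multilinearImage) hcomm hgen
  obtain ⟨N, hN, hsum⟩ := hwidth.exists_pos_forall_mem_nsmul (multilinearImage_nonempty lam).pow
  exact ⟨N, hN, fun x ↦ exists_eq_sum_of_mem_nsmul (hsum x)⟩
end
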